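/- arXiv:0801.4336 — 3 statements merged into one kernel-verified Lean document; each statement's English description precedes it below -/
import Mathlib

section
/- Let A ∈ ℚ^{m×n} be a matrix of full column rank defining a parametric polyhedron P of finite lattice width, and let φ be the maximum size of a column of A. Then there exist a natural number t with t ≤ 2 m^{2n} (2n+1)ⁿ (24 n⁵ φ)^{n−1} and triples (F_i, G_i, c_i), i = 1,…,t, where F_i, G_i : ℝ^m → ℝⁿ are rational linear maps and c_i ∈ ℤⁿ is a nonzero integral row vector, such that for every b ∈ ℝ^m with P_b nonempty: (a) for all i, c_i G_i b ≤ min{c_i·x : x ∈ P_b} ≤ max{c_i·x : x ∈ P_b} ≤ c_i F_i b, and (b) w(P_b) = min over i of c_i (F_i − G_i) b; in particular the lattice width of P_b is attained along c_i for some i. -/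
open Matrix Set

noncomputable def widthAlong {n : ℕ} (K : Set (Fin n → ℝ)) (c : Fin n → ℝ) : EReal :=
  sSup ((fun x => ((∑ i, c i * x i : ℝ) : EReal)) '' K) -
    sInf ((fun x => ((∑ i, c i * x i : ℝ) : EReal)) '' K)

noncomputable def latticeWidth {n : ℕ} (K : Set (Fin n → ℝ)) : EReal :=
  sInf {w : EReal | ∃ c : Fin n → ℤ, c ≠ 0 ∧ w = widthAlong K (fun i => (c i : ℝ))}

def Pb {m n : ℕ} (A : Matrix (Fin m) (Fin n) ℚ) (b : Fin m → ℝ) : Set (Fin n → ℝ) :=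
  {x | ∀ i, (∑ j, (A i j : ℝ) * x j) ≤ b i}

/-- The binary encoding size of a rational number `p/q` (in lowest terms, `q > 0`):
`1 + ⌈log(|p|+1)⌉ + ⌈log(q+1)⌉`. -/
def ratSize (α : ℚ) : ℕ :=
  1 + Nat.clog 2 (α.num.natAbs + 1) + Nat.clog 2 (α.den + 1)

/-- The size of a rational vector: its length plus the sum of the sizes of its entries. -/
def vecSize {m : ℕ} (a : Fin m → ℚ) : ℕ := m + ∑ i, ratSize (a i)

/-- A rational linear map `ℝ^m → ℝⁿ`, given by a rational matrix, applied to `b`. -/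
def applyRat {m n : ℕ} (F : Matrix (Fin n) (Fin m) ℚ) (b : Fin m → ℝ) : Fin n → ℝ :=
  (F.map ((↑) : ℚ → ℝ)).mulVec b


lemma farkas {V : Type*} [AddCommGroup V] [Module ℝ V] : ∀ (k : ℕ) (a : Fin k → (V →ₗ[ℝ] ℝ))
    (c : V →ₗ[ℝ] ℝ), (∀ x, (∀ i, a i x ≤ 0) → c x ≤ 0) →
    ∃ y : Fin k → ℝ, (∀ i, 0 ≤ y i) ∧ c = ∑ i, y i • a i := by
  intro k
  induction k with
  | zero =>
    intro a c h
    refine ⟨fun _ => 0, fun i => le_rfl, ?_⟩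
    ext x
    have h1 := h x (fun i => i.elim0)
    have h2 := h (-x) (fun i => i.elim0)
    simp at h2 ⊢
    linarith
  | succ k ih =>
    intro a c h
    by_cases h0 : ∀ x, (∀ i : Fin k, a i.castSucc x ≤ 0) → c x ≤ 0
    · obtain ⟨y, hy, hc⟩ := ih (fun i => a i.castSucc) c h0
      refine ⟨Fin.snoc y 0, ?_, ?_⟩
      · intro i
        refine Fin.lastCases ?_ (fun j => ?_) i
        · simp
        · simpa using hy j
      · rw [Fin.sum_univ_castSucc]
        simpa using hc
    · push Not at h0
      obtain ⟨x, hx, hcx⟩ := h0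
      set al := a (Fin.last k) with hal
      have hpos : 0 < al x := by
        by_contra hneg
        push Not at hneg
        refine absurd (h x (fun i => ?_)) (not_le.mpr hcx)
        refine Fin.lastCases ?_ (fun j => ?_) i
        · exact hneg
        · exact hx j
      have key := ih (fun i => a i.castSucc - (a i.castSucc x / al x) • al)
        (c - (c x / al x) • al) (by
          intro z hz
          have := h (z - (al z / al x) • x) (fun i => by
            refine Fin.lastCases ?_ (fun j => ?_) i
            · rw [← hal]; simp [hpos.ne']
            · have := hz j
              simp at this ⊢
              have e : al z / al x * a j.castSucc x = a j.castSucc x / al x * al z := by ring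
              linarith)
          simp at this ⊢
          have e : al z / al x * c x = c x / al x * al z := by ring
          linarith)
      obtain ⟨y, hy, hc⟩ := key
      refine ⟨Fin.snoc y (c x / al x - ∑ i, y i * (a i.castSucc x / al x)), ?_, ?_⟩
      · intro i
        refine Fin.lastCases ?_ (fun j => ?_) i
        · simp only [Fin.snoc_last]
          have h1 : ∑ i, y i * (a i.castSucc x / al x) ≤ 0 :=
            Finset.sum_nonpos fun i _ => mul_nonpos_of_nonneg_of_nonpos (hy i)
              (div_nonpos_of_nonpos_of_nonneg (hx i) hpos.le)
          have h2 : 0 ≤ c x / al x := by positivity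
          linarith
        · simpa using hy j
      · rw [Fin.sum_univ_castSucc]
        simp only [Fin.snoc_castSucc, Fin.snoc_last, ← hal]
        rw [sub_eq_iff_eq_add] at hc
        ext z
        have hz := LinearMap.congr_fun hc z
        simp only [LinearMap.add_apply, LinearMap.sum_apply, LinearMap.smul_apply,
          LinearMap.sub_apply, smul_eq_mul, mul_sub, Finset.sum_sub_distrib] at hz ⊢
        rw [hz, sub_mul, Finset.sum_mul]
        simp only [mul_assoc]
        ring

lemma basis_rows {K : Type*} [Field K] {I : Type*} [Fintype I] {n : ℕ} (A : Matrix I (Fin n) K)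
    (s t : Set I) (hs : LinearIndepOn K (fun i => A i) s) (hst : s ⊆ t)
    (ht : ∀ x : Fin n → K, (∀ i ∈ t, ∑ j, A i j * x j = 0) → x = 0) :
    ∃ f : Fin n → I, Function.Injective f ∧ (∀ j, f j ∈ t) ∧ (∀ i ∈ s, ∃ j, f j = i) ∧
      (A.submatrix f id).det ≠ 0 := by
  classical
  obtain ⟨b, hbt, hsb, hspan, hb⟩ := exists_linearIndepOn_extension hs hst
  have htop : Submodule.span K ((fun i => A i) '' b) = ⊤ := by
    by_contra hne
    obtain ⟨g, hg0, hg⟩ := Submodule.exists_le_ker_of_lt_top _ (lt_top_iff_ne_top.mpr hne)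
    apply hg0
    have hx := ht (fun j => g (Pi.single j 1)) (by
      intro i hi
      have h1 : g (A i) = 0 := hg (hspan ⟨i, hi, rfl⟩)
      have h2 : A i = ∑ j, A i j • (Pi.single j (1 : K) : Fin n → K) := by
        ext q; simp [Finset.sum_apply, Pi.single_apply]
      rw [h2] at h1
      simpa using h1)
    apply LinearMap.pi_ext'
    intro j
    ext
    simpa using congrFun hx j
  have hspan' : ⊤ ≤ Submodule.span K (Set.range fun i : b => A i) := by
    rw [← htop, Set.image_eq_range]
  let B := Module.Basis.mk (v := fun i : b => A i) hb hspan'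
  have hcard : Fintype.card b = n := by
    have := Module.finrank_eq_card_basis B
    simpa using this.symm
  let e : Fin n ≃ b := (Fintype.equivFinOfCardEq hcard).symm
  refine ⟨fun j => (e j : I), ?_, fun j => hbt (e j).2, ?_, ?_⟩
  · exact Subtype.val_injective.comp e.injective
  · intro i hi
    exact ⟨e.symm ⟨i, hsb hi⟩, by simp⟩
  · have : LinearIndependent K (A.submatrix (fun j => (e j : I)) id).row := by
      have h2 : LinearIndependent K (fun i : b => A i) := hb
      exact h2.comp e e.injective
    rw [Matrix.linearIndependent_rows_iff_isUnit, Matrix.isUnit_iff_isUnit_det] at this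
    exact this.ne_zero
/-- LP duality -/
lemma lp_dual {m n : ℕ} (A : Matrix (Fin m) (Fin n) ℝ) (b : Fin m → ℝ) (c : Fin n → ℝ) (δ : ℝ)
    (x0 : Fin n → ℝ) (hx0 : ∀ i, ∑ j, A i j * x0 j ≤ b i)
    (hub : ∀ x : Fin n → ℝ, (∀ i, ∑ j, A i j * x j ≤ b i) → ∑ j, c j * x j ≤ δ) :
    ∃ y : Fin m → ℝ, (∀ i, 0 ≤ y i) ∧ (∀ j, ∑ i, y i * A i j = c j) ∧ ∑ i, y i * b i ≤ δ := by
  classical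
  -- functional on ℝⁿ × ℝ
  let L : (Fin n → ℝ) → ℝ → (((Fin n → ℝ) × ℝ) →ₗ[ℝ] ℝ) := fun a β =>
    (∑ j, a j • (LinearMap.proj j ∘ₗ LinearMap.fst ℝ (Fin n → ℝ) ℝ)) - β • LinearMap.snd ℝ _ ℝ
  have hL : ∀ a β z, L a β z = ∑ j, a j * z.1 j - β * z.2 := by
    intro a β z
    simp [L]
  obtain ⟨y, hy, hc⟩ := farkas (m + 1) (Fin.snoc (fun i => L (A i) (b i)) (L 0 1)) (L c δ) (by
    rintro ⟨x, s⟩ h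
    have hs : 0 ≤ s := by
      have := h (Fin.last m)
      simp only [Fin.snoc_last] at this
      rw [hL] at this
      simp at this
      exact this
    have hx : ∀ i, ∑ j, A i j * x j ≤ b i * s := by
      intro i
      have := h i.castSucc
      simp only [Fin.snoc_castSucc] at this
      rw [hL] at this
      simp at this
      linarith
    rw [hL]
    simp only
    rcases hs.eq_or_lt with h0 | hpos
    · subst h0
      simp only [mul_zero] at hx
      simp only [mul_zero, sub_zero]
      by_contra hneg
      push Not at hneg
      set e := ∑ j, c j * x j with he
      have h0 := hub x0 hx0
      set τ := (δ - ∑ j, c j * x0 j + 1) / e with hτ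
      have hτ0 : 0 ≤ τ := by
        apply div_nonneg _ hneg.le
        linarith
      have := hub (x0 + τ • x) (by
        intro i
        simp only [Pi.add_apply, Pi.smul_apply, smul_eq_mul, mul_add, Finset.sum_add_distrib]
        have e1 : ∑ j, A i j * (τ * x j) = τ * ∑ j, A i j * x j := by
          rw [Finset.mul_sum]; exact Finset.sum_congr rfl fun j _ => by ring
        rw [e1]
        have := mul_nonpos_of_nonneg_of_nonpos hτ0 (hx i)
        linarith [hx0 i])
      simp only [Pi.add_apply, Pi.smul_apply, smul_eq_mul, mul_add, Finset.sum_add_distrib] at this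
      have e1 : ∑ j, c j * (τ * x j) = τ * e := by
        rw [he, Finset.mul_sum]; exact Finset.sum_congr rfl fun j _ => by ring
      rw [e1, hτ, div_mul_cancel₀ _ hneg.ne'] at this
      linarith
    · have := hub (s⁻¹ • x) (by
        intro i
        have e1 : ∑ j, A i j * (s⁻¹ • x) j = s⁻¹ * ∑ j, A i j * x j := by
          rw [Finset.mul_sum]; exact Finset.sum_congr rfl fun j _ => by simp; ring
        rw [e1, inv_mul_le_iff₀ hpos]
        linarith [hx i])
      have e1 : ∑ j, c j * (s⁻¹ • x) j = s⁻¹ * ∑ j, c j * x j := by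
        rw [Finset.mul_sum]; exact Finset.sum_congr rfl fun j _ => by simp; ring
      rw [e1, inv_mul_le_iff₀ hpos] at this
      linarith)
  refine ⟨fun i => y i.castSucc, fun i => hy _, ?_, ?_⟩
  · intro j
    have := LinearMap.congr_fun hc (Pi.single j 1, 0)
    rw [Fin.sum_univ_castSucc] at this
    simp only [Fin.snoc_castSucc, Fin.snoc_last, LinearMap.add_apply, LinearMap.sum_apply,
      LinearMap.smul_apply, hL] at this
    simp [Pi.single_apply] at this
    exact this.symm
  · have := LinearMap.congr_fun hc (0, 1)
    rw [Fin.sum_univ_castSucc] at this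
    simp only [Fin.snoc_castSucc, Fin.snoc_last, LinearMap.add_apply, LinearMap.sum_apply,
      LinearMap.smul_apply, hL] at this
    simp at this
    linarith [hy (Fin.last m)]

/-- reduce to independent support -/
lemma dual_indep {m n : ℕ} (A : Matrix (Fin m) (Fin n) ℝ) (b : Fin m → ℝ) (c : Fin n → ℝ) (δ : ℝ)
    (hopt : ∀ y : Fin m → ℝ, (∀ i, 0 ≤ y i) → (∀ j, ∑ i, y i * A i j = c j) → δ ≤ ∑ i, y i * b i)
    (hex : ∃ y : Fin m → ℝ, (∀ i, 0 ≤ y i) ∧ (∀ j, ∑ i, y i * A i j = c j) ∧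
      ∑ i, y i * b i = δ) :
    ∃ y : Fin m → ℝ, (∀ i, 0 ≤ y i) ∧ (∀ j, ∑ i, y i * A i j = c j) ∧ ∑ i, y i * b i = δ ∧
      LinearIndepOn ℝ (fun i => A i) {i | y i ≠ 0} := by
  classical
  have hP : ∃ k : ℕ, ∃ y : Fin m → ℝ, (∀ i, 0 ≤ y i) ∧ (∀ j, ∑ i, y i * A i j = c j) ∧
      ∑ i, y i * b i = δ ∧ (Finset.univ.filter fun i => y i ≠ 0).card = k := by
    obtain ⟨y, h1, h2, h3⟩ := hex
    exact ⟨_, y, h1, h2, h3, rfl⟩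
  obtain ⟨y, h1, h2, h3, h4⟩ := Nat.find_spec hP
  have hmin := fun k => Nat.find_min hP (m := k)
  rw [← h4] at hmin
  refine ⟨y, h1, h2, h3, ?_⟩
  -- dependence
  by_contra hdep
  obtain ⟨w, hw0, hwA, i0, hi0⟩ : ∃ w : Fin m → ℝ, (∀ i, y i = 0 → w i = 0) ∧
      (∀ j, ∑ i, w i * A i j = 0) ∧ ∃ i, 0 < w i := by
    have : ∃ w : Fin m → ℝ, (∀ i, y i = 0 → w i = 0) ∧
      (∀ j, ∑ i, w i * A i j = 0) ∧ ∃ i, w i ≠ 0 := by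
      rw [LinearIndepOn, Fintype.linearIndependent_iff] at hdep
      push Not at hdep
      obtain ⟨g, hg, ⟨i, hi⟩, hgi⟩ := hdep
      refine ⟨fun i => if h : y i ≠ 0 then g ⟨i, h⟩ else 0, ?_, ?_, i, ?_⟩
      · intro i hi; simp [hi]
      · intro j
        have := congrFun hg j
        simp only [Finset.sum_apply, Pi.smul_apply, smul_eq_mul, Pi.zero_apply] at this
        refine (Fintype.sum_subtype_add_sum_subtype (fun i => y i ≠ 0) _).symm.trans ?_
        have e2 : ∑ i : {i // ¬ y i ≠ 0},
            (if h : y i ≠ 0 then g ⟨i, h⟩ else 0) * A i j = 0 := by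
          apply Finset.sum_eq_zero
          rintro ⟨i, hi⟩ _
          simp [hi]
        have e1 : ∑ i : {i // y i ≠ 0},
            (if h : y i ≠ 0 then g ⟨i, h⟩ else 0) * A i j = 0 := by
          refine Eq.trans (Finset.sum_congr rfl ?_) this
          rintro ⟨i, hi⟩ _
          simp [hi]
        exact (congrArg₂ (· + ·) e1 e2).trans (add_zero 0)
      · have hi' : y i ≠ 0 := hi
        simp only [hi', ne_eq, not_false_eq_true, dite_true]
        exact hgi
    obtain ⟨w, ha, hb, i, hi⟩ := this
    rcases lt_or_gt_of_ne hi with h | h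
    · exact ⟨-w, fun i hi => by simp [ha i hi], fun j => by simpa using hb j, i, by simpa using h⟩
    · exact ⟨w, ha, hb, i, h⟩
  have hshift : ∀ τ : ℝ, (∀ i, 0 ≤ y i + τ * w i) → τ * ∑ i, w i * b i ≥ 0 := by
    intro τ hτ
    have := hopt (fun i => y i + τ * w i) hτ (by
      intro j
      simp only [add_mul, Finset.sum_add_distrib, h2, mul_assoc, ← Finset.mul_sum, hwA]
      simp)
    simp only [add_mul, Finset.sum_add_distrib, h3, mul_assoc, ← Finset.mul_sum] at this
    linarith
  obtain ⟨a, ha, hamin⟩ := Finset.exists_min_image (Finset.univ.filter fun i => 0 < w i)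
    (fun i => y i / w i) ⟨i0, by simpa using hi0⟩
  simp only [Finset.mem_filter, Finset.mem_univ, true_and] at ha hamin
  have hya : 0 < y a := lt_of_le_of_ne (h1 a) (fun h => ha.ne' (hw0 a h.symm))
  have hfeas : ∀ i, 0 ≤ y i + (-(y a / w a)) * w i := by
    intro i
    rcases le_or_gt (w i) 0 with h | h
    · have : 0 ≤ y a / w a := by positivity
      nlinarith [h1 i]
    · have := hamin i h
      rw [le_div_iff₀ h] at this
      linarith
  have hwb : ∑ i, w i * b i = 0 := by
    apply le_antisymm
    · have := hshift _ hfeas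
      have h5 : 0 < y a / w a := by positivity
      nlinarith
    · -- small positive step
      by_contra hneg
      push Not at hneg
      obtain ⟨τ, hτ, hτf⟩ : ∃ τ : ℝ, 0 < τ ∧ ∀ i, 0 ≤ y i + τ * w i := by
        have hev : ∀ i, ∀ᶠ τ in nhdsWithin (0:ℝ) (Set.Ioi 0), 0 ≤ y i + τ * w i := by
          intro i
          rcases (h1 i).eq_or_lt with h | h
          · exact Filter.Eventually.of_forall fun τ => by rw [hw0 i h.symm, ← h]; simp
          · have : Filter.Tendsto (fun τ : ℝ => y i + τ * w i) (nhds 0) (nhds (y i + 0 * w i)) :=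
              (Continuous.tendsto (by fun_prop) 0)
            rw [zero_mul, add_zero] at this
            exact ((this.eventually (lt_mem_nhds h)).filter_mono nhdsWithin_le_nhds).mono
              fun τ h => h.le
        have := (Filter.eventually_all.mpr hev).and self_mem_nhdsWithin
        obtain ⟨τ, h1, h2⟩ := this.exists
        exact ⟨τ, h2, h1⟩
      have := hshift τ hτf
      nlinarith
  refine hmin _ ?_ ⟨fun i => y i + (-(y a / w a)) * w i, hfeas, ?_, ?_, rfl⟩
  · apply Finset.card_lt_card
    rw [Finset.ssubset_iff_of_subset]
    · refine ⟨a, by simpa using hya.ne', ?_⟩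
      simp [ha.ne']
    · intro i
      simp only [Finset.mem_filter, Finset.mem_univ, true_and]
      intro h h'
      apply h
      rw [h', hw0 i h']; simp
  · intro j
    simp only [add_mul, Finset.sum_add_distrib, h2, mul_assoc, ← Finset.mul_sum, hwA]
    simp
  · simp only [add_mul, Finset.sum_add_distrib, h3, mul_assoc, ← Finset.mul_sum, hwb]
    simp

lemma basic_opt {m n : ℕ} (A : Matrix (Fin m) (Fin n) ℝ) (b : Fin m → ℝ) (c : Fin n → ℝ) (δ : ℝ)
    (hker : ∀ x : Fin n → ℝ, (∀ i, ∑ j, A i j * x j = 0) → x = 0)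
    (x0 : Fin n → ℝ) (hx0 : ∀ i, ∑ j, A i j * x0 j ≤ b i)
    (hub : ∀ δ' : ℝ, (∀ x : Fin n → ℝ, (∀ i, ∑ j, A i j * x j ≤ b i) → ∑ j, c j * x j ≤ δ') ↔
      δ ≤ δ') :
    ∃ (f : Fin n → Fin m) (y : Fin n → ℝ), (A.submatrix f id).det ≠ 0 ∧ (∀ s, 0 ≤ y s) ∧
      (∀ j, ∑ s, y s * A (f s) j = c j) ∧ ∑ s, y s * b (f s) = δ := by
  classical
  have hopt : ∀ y : Fin m → ℝ, (∀ i, 0 ≤ y i) → (∀ j, ∑ i, y i * A i j = c j) →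
      δ ≤ ∑ i, y i * b i := by
    intro y hy hc
    rw [← hub]
    intro x hx
    have : ∑ j, c j * x j = ∑ i, y i * ∑ j, A i j * x j := by
      simp only [← hc, Finset.sum_mul, Finset.mul_sum]
      rw [Finset.sum_comm]
      exact Finset.sum_congr rfl fun _ _ => Finset.sum_congr rfl fun _ _ => by ring
    rw [this]
    exact Finset.sum_le_sum fun i _ => mul_le_mul_of_nonneg_left (hx i) (hy i)
  obtain ⟨y, h1, h2, h3⟩ := lp_dual A b c δ x0 hx0 ((hub δ).mpr le_rfl)
  obtain ⟨y, h1, h2, h3, h4⟩ := dual_indep A b c δ hopt ⟨y, h1, h2, le_antisymm h3 (hopt y h1 h2)⟩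
  obtain ⟨f, hf, -, hfs, hdet⟩ := basis_rows A _ Set.univ h4 (Set.subset_univ _)
    (fun x hx => hker x fun i => hx i trivial)
  have hsum : ∀ g : Fin m → ℝ, ∑ s, y (f s) * g (f s) = ∑ i, y i * g i := by
    intro g
    rw [← Finset.sum_image (f := fun i => y i * g i) (s := Finset.univ) (g := f) hf.injOn]
    apply Finset.sum_subset (Finset.subset_univ _)
    intro i _ hi
    have : y i = 0 := by
      by_contra h
      obtain ⟨j, hj⟩ := hfs i h
      exact hi (Finset.mem_image.mpr ⟨j, Finset.mem_univ _, hj⟩)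
    simp [this]
  refine ⟨f, fun s => y (f s), hdet, fun s => h1 _, fun j => ?_, ?_⟩
  · rw [hsum fun i => A i j, h2]
  · rw [hsum b, h3]

/-- pulling decomposition -/
def rayOf {I : Type*} [Fintype I] [DecidableEq I] {n k : ℕ} (r : Finset I → Fin n → ℤ)
    (S : Finset I) (i : Fin k → I) (j : Fin k) : Fin n → ℤ :=
  r (S \ (Finset.univ.filter (· < j)).image i)

def denOf {I : Type*} [Fintype I] [DecidableEq I] {n k : ℕ} (M : Matrix I (Fin n) ℤ)
    (r : Finset I → Fin n → ℤ) (S : Finset I) (i : Fin k → I) : ℕ :=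
  ∏ j, max 1 ((M *ᵥ rayOf r S i j) (i j)).toNat

lemma rayOf_zero {I : Type*} [Fintype I] [DecidableEq I] {n k : ℕ} (r : Finset I → Fin n → ℤ)
    (S : Finset I) (a : I) (i : Fin k → I) :
    rayOf r S (Fin.cons a i : Fin (k + 1) → I) 0 = r S := by
  simp [rayOf]

lemma rayOf_succ {I : Type*} [Fintype I] [DecidableEq I] {n k : ℕ} (r : Finset I → Fin n → ℤ)
    (S : Finset I) (a : I) (i : Fin k → I) (j : Fin k) :
    rayOf r S (Fin.cons a i : Fin (k + 1) → I) j.succ = rayOf r (S.erase a) i j := by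
  unfold rayOf
  congr 1
  ext x
  simp only [Finset.mem_sdiff, Finset.mem_image, Finset.mem_filter, Finset.mem_univ, true_and,
    Finset.mem_erase, Fin.exists_fin_succ, Fin.cons_zero, Fin.cons_succ, Fin.succ_lt_succ_iff,
    Fin.succ_pos, not_or]
  tauto

lemma denOf_cons {I : Type*} [Fintype I] [DecidableEq I] {n k : ℕ} (M : Matrix I (Fin n) ℤ)
    (r : Finset I → Fin n → ℤ) (S : Finset I) (a : I) (i : Fin k → I) :
    denOf M r S (Fin.cons a i : Fin (k + 1) → I) =
      max 1 ((M *ᵥ r S) a).toNat * denOf M r (S.erase a) i := by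
  unfold denOf
  rw [Fin.prod_univ_succ]
  simp [rayOf_zero, rayOf_succ]

/-- The space of vectors whose image is supported in `S`. -/
def suppSub {I : Type*} {n : ℕ} (M : Matrix I (Fin n) ℤ) (S : Finset I) :
    Submodule ℚ (Fin n → ℚ) where
  carrier := {x | ∀ i, i ∉ S → ∑ j, (M i j : ℚ) * x j = 0}
  add_mem' := by
    intro x y hx hy i hi
    simp [mul_add, Finset.sum_add_distrib, hx i hi, hy i hi]
  zero_mem' := by intro i _; simp
  smul_mem' := by
    intro c x hx i hi
    have : ∑ j, (M i j : ℚ) * (c • x) j = c * ∑ j, (M i j : ℚ) * x j := by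
      rw [Finset.mul_sum]; exact Finset.sum_congr rfl fun j _ => by simp; ring
    rw [this, hx i hi, mul_zero]

lemma cast_mem_suppSub {I : Type*} {n : ℕ} (M : Matrix I (Fin n) ℤ) (S : Finset I)
    (v : Fin n → ℤ) : (fun q => (v q : ℚ)) ∈ suppSub M S ↔ ∀ i, i ∉ S → (M *ᵥ v) i = 0 := by
  change (∀ i, i ∉ S → ∑ j, (M i j : ℚ) * (v j : ℚ) = 0) ↔ _
  refine forall_congr' fun i => imp_congr_right fun _ => ?_
  simp only [Matrix.mulVec, dotProduct]
  exact_mod_cast Iff.rfl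

lemma pulling {I : Type*} [Fintype I] [DecidableEq I] [Nonempty I] {n : ℕ}
    (M : Matrix I (Fin n) ℤ)
    (hM : ∀ x : Fin n → ℤ, M *ᵥ x = 0 → x = 0)
    (r : Finset I → Fin n → ℤ) (hr0 : ∀ S i, 0 ≤ (M *ᵥ r S) i)
    (hrS : ∀ S i, i ∉ S → (M *ᵥ r S) i = 0)
    (hr : ∀ S, (∃ v : Fin n → ℤ, v ≠ 0 ∧ (∀ i, 0 ≤ (M *ᵥ v) i) ∧ ∀ i, i ∉ S → (M *ᵥ v) i = 0) →
      r S ≠ 0) :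
    ∀ (k : ℕ) (S : Finset I) (v : Fin n → ℤ), Module.finrank ℚ (suppSub M S) ≤ k →
      (∀ i, 0 ≤ (M *ᵥ v) i) → (∀ i, i ∉ S → (M *ᵥ v) i = 0) →
      ∃ (i : Fin k → I) (N : Fin k → ℕ), (∀ j, N j ≠ 0 → rayOf r S i j ≠ 0) ∧
        (denOf M r S i : ℤ) • v = ∑ j, (N j : ℤ) • rayOf r S i j := by
  intro k
  induction k with
  | zero =>
    intro S v hS hv hvS
    refine ⟨Fin.elim0, Fin.elim0, fun j => j.elim0, ?_⟩
    have h0 : suppSub M S = ⊥ := Submodule.finrank_eq_zero.mp (Nat.le_zero.mp hS)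
    have : (fun q => (v q : ℚ)) ∈ suppSub M S := (cast_mem_suppSub M S v).mpr hvS
    rw [h0, Submodule.mem_bot] at this
    have hv0 : v = 0 := by
      ext q
      have := congrFun this q
      simpa using this
    simp [hv0]
  | succ k ih =>
    intro S v hS hv hvS
    by_cases hv0 : v = 0
    · subst hv0
      exact ⟨fun _ => Classical.arbitrary I, fun _ => 0, fun j h => absurd rfl h, by simp⟩
    have hrne := hr S ⟨v, hv0, hv, hvS⟩
    have hpos : ∃ a, 0 < (M *ᵥ r S) a := by
      by_contra hno
      push Not at hno
      exact hrne (hM _ (funext fun i => le_antisymm (hno i) (hr0 S i)))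
    obtain ⟨a0, ha0⟩ := hpos
    obtain ⟨a, ha, hamin⟩ := Finset.exists_min_image
      (Finset.univ.filter fun i => 0 < (M *ᵥ r S) i)
      (fun i => ((M *ᵥ v) i : ℚ) / ((M *ᵥ r S) i : ℚ)) ⟨a0, by simpa using ha0⟩
    simp only [Finset.mem_filter, Finset.mem_univ, true_and] at ha hamin
    have haS : a ∈ S := by
      by_contra h
      exact ha.ne' (hrS S a h)
    set ρ := (M *ᵥ r S) a with hρ
    set μ := (M *ᵥ v) a with hμ
    have hv1 : ∀ i, (M *ᵥ (ρ • v - μ • r S)) i = ρ * (M *ᵥ v) i - μ * (M *ᵥ r S) i := by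
      intro i
      rw [Matrix.mulVec_sub, Matrix.mulVec_smul, Matrix.mulVec_smul]
      simp
    have hlt : Module.finrank ℚ (suppSub M (S.erase a)) < Module.finrank ℚ (suppSub M S) := by
      apply Submodule.finrank_lt_finrank_of_lt
      refine lt_of_le_of_ne ?_ ?_
      · intro x hx i hi
        exact hx i (fun h => hi (Finset.mem_of_mem_erase h))
      · intro heq
        have h1 : (fun q => (r S q : ℚ)) ∈ suppSub M S := (cast_mem_suppSub M S _).mpr (hrS S)
        rw [← heq, cast_mem_suppSub] at h1
        exact ha.ne' (h1 a (by simp))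
    obtain ⟨i, N, hN, hsum⟩ := ih (S.erase a) (ρ • v - μ • r S) (by omega) (by
      intro i
      rw [hv1]
      rcases (hr0 S i).eq_or_lt with h | h
      · rw [← h]; simp; exact mul_nonneg ha.le (hv i)
      · have := hamin i h
        rw [div_le_div_iff₀ (by exact_mod_cast ha) (by exact_mod_cast h)] at this
        have h2 : μ * (M *ᵥ r S) i ≤ (M *ᵥ v) i * ρ := by exact_mod_cast this
        linarith) (by
      intro i hi
      rw [hv1]
      by_cases hia : i = a
      · subst hia; rw [← hμ, ← hρ]; ring
      · have : i ∉ S := fun h => hi (Finset.mem_erase.mpr ⟨hia, h⟩)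
        rw [hvS i this, hrS S i this]; ring)
    refine ⟨Fin.cons a i, Fin.cons (denOf M r (S.erase a) i * μ.toNat) N, ?_, ?_⟩
    · intro j
      refine Fin.cases ?_ (fun j => ?_) j
      · intro _; rw [rayOf_zero]; exact hrne
      · rw [rayOf_succ]; simpa using hN j
    · rw [Fin.sum_univ_succ]
      simp only [rayOf_zero, rayOf_succ, Fin.cons_zero, Fin.cons_succ]
      rw [← hsum, denOf_cons, ← hρ]
      have e1 : ((max 1 ρ.toNat : ℕ) : ℤ) = ρ := by
        rw [max_eq_right (by omega)]; omega
      have e2 : ((μ.toNat : ℕ) : ℤ) = μ := Int.toNat_of_nonneg (hv a)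
      push_cast [e2] at e1 ⊢
      rw [e1]
      ext q
      simp
      ring

lemma size_class {a b : ℕ} (h : a.size = b.size) : a ≤ 2 * b ∧ (b ≠ 0 → a < 2 * b) := by
  have h1 : b ≠ 0 → a < 2 * b := by
    intro hb
    have hs : 0 < b.size := Nat.size_pos.mpr (Nat.pos_of_ne_zero hb)
    have h2 : a < 2 ^ a.size := Nat.lt_size_self a
    have h3 : 2 ^ (b.size - 1) ≤ b := Nat.lt_size.mp (by omega)
    have h4 : 2 ^ b.size = 2 * 2 ^ (b.size - 1) := by
      rw [← pow_succ']; congr 1; omega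
    rw [h] at h2
    omega
  refine ⟨?_, h1⟩
  by_cases hb : b = 0
  · subst hb
    rw [Nat.size_zero, Nat.size_eq_zero] at h
    simp [h]
  · exact (h1 hb).le

lemma core {I : Type*} [Fintype I] [DecidableEq I] [Nonempty I] {n' : ℕ}
    (M : Matrix I (Fin (n' + 1)) ℤ)
    (hM : ∀ x : Fin (n' + 1) → ℤ, M *ᵥ x = 0 → x = 0) (R : ℕ) (hR1 : 1 ≤ R)
    (hray : ∀ S : Finset I, (∃ v : Fin (n' + 1) → ℤ, v ≠ 0 ∧ (∀ i, 0 ≤ (M *ᵥ v) i) ∧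
      ∀ i, i ∉ S → (M *ᵥ v) i = 0) →
      ∃ v : Fin (n' + 1) → ℤ, v ≠ 0 ∧ (∀ i, 0 ≤ (M *ᵥ v) i) ∧
      (∀ i, i ∉ S → (M *ᵥ v) i = 0) ∧ ∀ i, (M *ᵥ v) i ≤ R) :
    ∃ T : Finset (Fin (n' + 1) → ℤ),
      T.card ≤ Fintype.card I ^ (n' + 1) * ((R ^ (n' + 1)).size + 1) ^ n' ∧
      (∀ s ∈ T, s ≠ 0 ∧ ∀ i, 0 ≤ (M *ᵥ s) i) ∧
      ∀ ℓ : (Fin (n' + 1) → ℤ) →+ ℝ, (∀ c, (∀ i, 0 ≤ (M *ᵥ c) i) → 0 ≤ ℓ c) →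
        ∀ c, c ≠ 0 → (∀ i, 0 ≤ (M *ᵥ c) i) → ∃ s ∈ T, ℓ s ≤ ℓ c := by
  classical
  have hchoose : ∀ S : Finset I, ∃ r : Fin (n' + 1) → ℤ, (∀ i, 0 ≤ (M *ᵥ r) i) ∧
      (∀ i, i ∉ S → (M *ᵥ r) i = 0) ∧ (∀ i, (M *ᵥ r) i ≤ R) ∧
      ((∃ v : Fin (n' + 1) → ℤ, v ≠ 0 ∧ (∀ i, 0 ≤ (M *ᵥ v) i) ∧
      ∀ i, i ∉ S → (M *ᵥ v) i = 0) → r ≠ 0) := by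
    intro S
    by_cases h : ∃ v : Fin (n' + 1) → ℤ, v ≠ 0 ∧ (∀ i, 0 ≤ (M *ᵥ v) i) ∧
      ∀ i, i ∉ S → (M *ᵥ v) i = 0
    · obtain ⟨v, h1, h2, h3, h4⟩ := hray S h
      exact ⟨v, h2, h3, h4, fun _ => h1⟩
    · exact ⟨0, by simp, by simp, by simp, fun h' => absurd h' h⟩
  choose r hr0 hrS hrR hr using hchoose
  let D : (Fin (n' + 1) → I) → ℕ := fun i => denOf M r Finset.univ i
  let ray : (Fin (n' + 1) → I) → Fin (n' + 1) → Fin (n' + 1) → ℤ := fun i j =>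
    rayOf r Finset.univ i j
  have hD1 : ∀ i, 1 ≤ D i := fun i => Finset.one_le_prod' fun j _ => le_max_left _ _
  have hDR : ∀ i, D i ≤ R ^ (n' + 1) := by
    intro i
    have : D i ≤ ∏ _j : Fin (n' + 1), R := Finset.prod_le_prod' fun j _ =>
      max_le hR1 (by have := hrR (Finset.univ \ (Finset.univ.filter (· < j)).image i) (i j)
                     simp only [rayOf]; omega)
    simpa using this
  have hray0 : ∀ i j a, 0 ≤ (M *ᵥ ray i j) a := fun i j a => hr0 _ a
  have hposC : ∀ i (d : ℤ) (w : Fin (n' + 1) → ℤ) (N : Fin (n' + 1) → ℤ), 0 < d → (∀ j, 0 ≤ N j) →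
      d • w = ∑ j, N j • ray i j → ∀ a, 0 ≤ (M *ᵥ w) a := by
    intro i d w N hd hN hw a
    have h1 : (M *ᵥ (d • w)) a = ∑ j, N j * (M *ᵥ ray i j) a := by
      rw [hw, Matrix.mulVec_sum]
      simp only [Matrix.mulVec_smul, Finset.sum_apply, Pi.smul_apply, smul_eq_mul]
    rw [Matrix.mulVec_smul] at h1
    have h2 : 0 ≤ d * (M *ᵥ w) a := by
      have : (d • (M *ᵥ w)) a = d * (M *ᵥ w) a := by simp
      rw [← this, h1]
      exact Finset.sum_nonneg fun j _ => mul_nonneg (hN j) (hray0 i j a)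
    exact nonneg_of_mul_nonneg_right h2 hd
  let Valid : (Fin (n' + 1) → I) → (Fin (n' + 1) → ℕ) → (Fin (n' + 1) → ℤ) → Prop :=
    fun i N c => c ≠ 0 ∧ (∀ j, N j ≤ D i) ∧ (∀ j, N j ≠ 0 → ray i j ≠ 0) ∧
      (D i : ℤ) • c = ∑ j, (N j : ℤ) • ray i j
  have hValC : ∀ i N c, Valid i N c → ∀ a, 0 ≤ (M *ᵥ c) a := by
    intro i N c hv
    exact hposC i (D i) c (fun j => N j) (by exact_mod_cast hD1 i) (fun j => by positivity)
      hv.2.2.2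
  let Y : Set (Fin (n' + 1) → ℤ) := {c | ∃ i N, Valid i N c}
  have hYfin : Y.Finite := by
    have : Y ⊆ ⋃ i : Fin (n' + 1) → I, ⋃ N ∈ Set.Iic (fun _ : Fin (n' + 1) => D i),
        {c | (D i : ℤ) • c = ∑ j, (N j : ℤ) • ray i j} := by
      rintro c ⟨i, N, hv⟩
      simp only [Set.mem_iUnion]
      exact ⟨i, N, hv.2.1, hv.2.2.2⟩
    refine Set.Finite.subset (Set.finite_iUnion fun i => ?_) this
    refine Set.Finite.biUnion (Set.finite_Iic _) fun N _ => Set.Subsingleton.finite ?_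
    intro c hc c' hc'
    have h : (D i : ℤ) • c = (D i : ℤ) • c' := Eq.trans hc (Eq.symm hc')
    have hd : (D i : ℤ) ≠ 0 := by have := hD1 i; omega
    exact smul_right_injective _ hd h
  -- every point dominates a valid one
  have hdom : ∀ ℓ : (Fin (n' + 1) → ℤ) →+ ℝ, (∀ c, (∀ i, 0 ≤ (M *ᵥ c) i) → 0 ≤ ℓ c) →
        ∀ c, c ≠ 0 → (∀ i, 0 ≤ (M *ᵥ c) i) → ∃ s ∈ Y, ℓ s ≤ ℓ c := by
    intro ℓ hℓ c hc0 hc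
    obtain ⟨i, N, hN, hsum⟩ := pulling M hM r hr0 hrS hr (n' + 1) Finset.univ c
      (by simpa using Submodule.finrank_le (suppSub M Finset.univ)) hc (by simp)
    by_cases hle : ∀ j, N j ≤ D i
    · exact ⟨c, ⟨i, N, hc0, hle, hN, hsum⟩, le_rfl⟩
    · push Not at hle
      obtain ⟨j, hj⟩ := hle
      refine ⟨ray i j, ⟨i, Pi.single j (D i), ?_, ?_, ?_, ?_⟩, ?_⟩
      · exact hN j (by omega)
      · intro k
        by_cases hk : k = j
        · subst hk; simp
        · simp [hk]
      · intro k hk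
        by_cases hkj : k = j
        · subst hkj; exact hN k (by omega)
        · simp [hkj] at hk
      · rw [Finset.sum_eq_single j]
        · simp
        · intro k _ hk; simp [hk]
        · simp
      · have hw := hℓ (c - ray i j) (hposC i (D i) _
          (fun k => (N k : ℤ) - if k = j then (D i : ℤ) else 0)
          (by exact_mod_cast hD1 i) (by
            intro k
            by_cases hk : k = j
            · subst hk; simp; omega
            · simp [hk]) (by
            rw [smul_sub, hsum]
            simp [sub_smul, Finset.sum_sub_distrib, ite_smul, ray]))
        rw [map_sub] at hw
        linarith
  set Lg := (R ^ (n' + 1)).size with hLg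
  let cls : (Fin (n' + 1) → ℕ) → Fin n' → ℕ := fun N j => (N j.castSucc).size
  have hrep : ∀ κ : (Fin (n' + 1) → I) × (Fin n' → Fin (Lg + 1)), ∃ s : Fin (n' + 1) → ℤ,
      (∃ N c, Valid κ.1 N c ∧ cls N = fun j => (κ.2 j : ℕ)) →
      ∃ N, Valid κ.1 N s ∧ (cls N = fun j => (κ.2 j : ℕ)) ∧
        ∀ N' c', Valid κ.1 N' c' → (cls N' = fun j => (κ.2 j : ℕ)) →
          N (Fin.last n') ≤ N' (Fin.last n') := by
    intro κ
    by_cases h : ∃ x : ℕ, ∃ N c, Valid κ.1 N c ∧ (cls N = fun j => (κ.2 j : ℕ)) ∧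
      N (Fin.last n') = x
    · obtain ⟨N, c, h1, h2, h3⟩ := Nat.find_spec h
      refine ⟨c, fun _ => ⟨N, h1, h2, fun N' c' h1' h2' => ?_⟩⟩
      rw [h3]
      exact Nat.find_min' h ⟨N', c', h1', h2', rfl⟩
    · refine ⟨0, fun ⟨N, c, h1, h2⟩ => absurd ⟨_, N, c, h1, h2, rfl⟩ h⟩
  choose rep hrep using hrep
  refine ⟨(Finset.univ.image rep).filter fun s => s ≠ 0 ∧ ∀ i, 0 ≤ (M *ᵥ s) i, ?_, ?_, ?_⟩
  · refine (Finset.card_filter_le _ _).trans (Finset.card_image_le.trans ?_)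
    simp
  · intro s hs
    exact (Finset.mem_filter.mp hs).2
  · intro ℓ hℓ c hc0 hc
    obtain ⟨s0, hs0, hs0c⟩ := hdom ℓ hℓ c hc0 hc
    obtain ⟨v, ⟨i, N, hv⟩, hvmin⟩ := Set.exists_min_image Y ℓ hYfin ⟨s0, hs0⟩
    have hvall : ∀ c, c ≠ 0 → (∀ i, 0 ≤ (M *ᵥ c) i) → ℓ v ≤ ℓ c := by
      intro c hc0 hc
      obtain ⟨s, hs, hsc⟩ := hdom ℓ hℓ c hc0 hc
      exact (hvmin s hs).trans hsc
    let κ : (Fin (n' + 1) → I) × (Fin n' → Fin (Lg + 1)) := (i, fun j => ⟨cls N j,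
      Nat.lt_succ_of_le (Nat.size_le_size ((hv.2.1 _).trans (hDR i)))⟩)
    obtain ⟨N', hs, hcls, hmin⟩ := hrep κ ⟨N, v, hv, rfl⟩
    set s := rep κ with hsdef
    refine ⟨s, Finset.mem_filter.mpr ⟨Finset.mem_image_of_mem _ (Finset.mem_univ _), hs.1,
      hValC _ _ _ hs⟩, ?_⟩
    have hlast := hmin N v hv rfl
    have hs4 : (D i : ℤ) • s = ∑ j, (N' j : ℤ) • ray i j := hs.2.2.2
    have hv4 := hv.2.2.2
    have hcoef : ∀ j, N' j ≤ 2 * N j ∧ (N j ≠ 0 → N' j < 2 * N j) := by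
      intro j
      refine Fin.lastCases ?_ (fun j => ?_) j
      · exact ⟨by omega, by omega⟩
      · exact size_class (congrFun hcls j)
    have hw4 : (D i : ℤ) • (2 • v - s) = ∑ j, (2 * (N j : ℤ) - N' j) • ray i j := by
      rw [smul_sub, hs4, smul_comm, hv4, Finset.smul_sum, ← Finset.sum_sub_distrib]
      refine Finset.sum_congr rfl fun j _ => ?_
      ext q; simp; ring
    have hwC := hposC i (D i) _ (fun j => 2 * (N j : ℤ) - N' j) (by exact_mod_cast hD1 i)
      (fun j => by have := (hcoef j).1; omega) hw4
    have hw0 : 2 • v - s ≠ 0 := by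
      intro h0
      rw [h0, smul_zero] at hw4
      apply hv.1
      have hall : ∀ j, N j = 0 := by
        intro j
        by_contra hj
        apply hv.2.2.1 j hj
        apply hM
        ext a
        have h1 : ∑ j, (2 * (N j : ℤ) - N' j) * (M *ᵥ ray i j) a = 0 := by
          have := congrFun (congrArg (fun z => M *ᵥ z) hw4) a
          simp only [Matrix.mulVec_zero, Matrix.mulVec_sum, Matrix.mulVec_smul] at this
          simpa using this.symm
        rw [Finset.sum_eq_zero_iff_of_nonneg (fun k _ => mul_nonneg
          (by have := (hcoef k).1; omega) (hray0 i k a))] at h1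
        have h2 := h1 j (Finset.mem_univ _)
        have h3 := (hcoef j).2 hj
        rcases mul_eq_zero.mp h2 with h | h
        · omega
        · exact h
      have hd : (D i : ℤ) ≠ 0 := by have := hD1 i; omega
      have : (D i : ℤ) • v = 0 := by rw [hv4]; simp [hall]
      exact (smul_eq_zero.mp this).resolve_left hd
    have hfin := hvall _ hw0 hwC
    have hcv := hvall c hc0 hc
    rw [map_sub, map_nsmul] at hfin
    simp only [nsmul_eq_mul, Nat.cast_ofNat] at hfin
    linarith

lemma adj_bound {n : ℕ} (E : Matrix (Fin n) (Fin n) ℤ) (β : ℕ) (hβ : 1 ≤ β)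
    (hE : ∀ i j, |E i j| ≤ β) (p q : Fin n) : |E.adjugate p q| ≤ (n.factorial * β ^ n : ℕ) := by
  rw [Matrix.adjugate_apply]
  have := Matrix.det_le (A := E.updateRow q (Pi.single p 1)) (abv := AbsoluteValue.abs)
    (x := (β : ℤ)) (by
      intro i j
      change |_| ≤ _
      by_cases hi : i = q
      · subst hi
        rw [Matrix.updateRow_self, Pi.single_apply]
        split_ifs
        · simpa using hβ
        · simp
      · rw [Matrix.updateRow_ne hi]; exact hE i j)
  simpa using this

lemma bounded_ray {I : Type*} [Fintype I] [DecidableEq I] {n : ℕ}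
    (M : Matrix I (Fin n) ℤ)
    (hM : ∀ x : Fin n → ℤ, M *ᵥ x = 0 → x = 0) (β : ℕ) (hβ : 1 ≤ β)
    (hMβ : ∀ i j, |M i j| ≤ β)
    (S : Finset I) (hS : ∃ v : Fin n → ℤ, v ≠ 0 ∧ (∀ i, 0 ≤ (M *ᵥ v) i) ∧
      ∀ i, i ∉ S → (M *ᵥ v) i = 0) :
    ∃ v : Fin n → ℤ, v ≠ 0 ∧ (∀ i, 0 ≤ (M *ᵥ v) i) ∧
      (∀ i, i ∉ S → (M *ᵥ v) i = 0) ∧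
      ∀ i, (M *ᵥ v) i ≤ (n * (β * (n.factorial * β ^ n)) : ℕ) := by
  classical
  have hP : ∃ k : ℕ, ∃ v : Fin n → ℤ, v ≠ 0 ∧ (∀ i, 0 ≤ (M *ᵥ v) i) ∧
      (∀ i, i ∉ S → (M *ᵥ v) i = 0) ∧
      (Finset.univ.filter fun i => (M *ᵥ v) i ≠ 0).card = k := by
    obtain ⟨v, h1, h2, h3⟩ := hS
    exact ⟨_, v, h1, h2, h3, rfl⟩
  obtain ⟨v, hv0, hv, hvS, hk⟩ := Nat.find_spec hP
  have hmin := fun k => Nat.find_min hP (m := k)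
  rw [← hk] at hmin
  obtain ⟨t, ht⟩ : ∃ t, (M *ᵥ v) t ≠ 0 := by
    by_contra h
    push Not at h
    exact hv0 (hM v (funext h))
  have htpos : 0 < (M *ᵥ v) t := lt_of_le_of_ne (hv t) ht.symm
  -- integer kernel
  have hkerpos : ∀ x : Fin n → ℤ, (∀ i, (M *ᵥ v) i = 0 → (M *ᵥ x) i = 0) → (M *ᵥ x) t = 0 →
      ∀ i, (M *ᵥ x) i ≤ 0 := by
    intro x hx hxt i0
    by_contra hi0
    push Not at hi0
    obtain ⟨a, ha, hamin⟩ := Finset.exists_min_image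
      (Finset.univ.filter fun i => 0 < (M *ᵥ x) i)
      (fun i => ((M *ᵥ v) i : ℚ) / ((M *ᵥ x) i : ℚ)) ⟨i0, by simpa using hi0⟩
    simp only [Finset.mem_filter, Finset.mem_univ, true_and] at ha hamin
    have hform : ∀ i, (M *ᵥ ((M *ᵥ x) a • v - (M *ᵥ v) a • x)) i =
        (M *ᵥ x) a * (M *ᵥ v) i - (M *ᵥ v) a * (M *ᵥ x) i := by
      intro i
      rw [Matrix.mulVec_sub, Matrix.mulVec_smul, Matrix.mulVec_smul]
      simp
    have hva : (M *ᵥ v) a ≠ 0 := fun h => ha.ne' (hx a h)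
    refine hmin _ ?_ ⟨(M *ᵥ x) a • v - (M *ᵥ v) a • x, ?_, ?_, ?_, rfl⟩
    · apply Finset.card_lt_card
      rw [Finset.ssubset_iff_of_subset]
      · refine ⟨a, by simpa using hva, ?_⟩
        simp only [Finset.mem_filter, Finset.mem_univ, true_and, not_not]
        rw [hform]; ring
      · intro i
        simp only [Finset.mem_filter, Finset.mem_univ, true_and]
        intro h h'
        apply h
        rw [hform, h', hx i h']; ring
    · intro h0
      have := hform t
      rw [h0, hxt, Matrix.mulVec_zero, mul_zero, sub_zero] at this
      exact (mul_pos ha htpos).ne this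
    · intro i
      rw [hform]
      rcases le_or_gt ((M *ᵥ x) i) 0 with h | h
      · have h1 := mul_nonneg ha.le (hv i)
        have h2 := mul_nonpos_of_nonneg_of_nonpos (hv a) h
        linarith
      · have := hamin i h
        rw [div_le_div_iff₀ (by exact_mod_cast ha) (by exact_mod_cast h)] at this
        have h2 : (M *ᵥ v) a * (M *ᵥ x) i ≤ (M *ᵥ v) i * (M *ᵥ x) a := by exact_mod_cast this
        linarith
    · intro i hi
      rw [hform, hvS i hi, hx i (hvS i hi)]; ring
  have hker : ∀ x : Fin n → ℤ, (∀ i, (M *ᵥ v) i = 0 → (M *ᵥ x) i = 0) → (M *ᵥ x) t = 0 →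
      x = 0 := by
    intro x hx hxt
    apply hM
    ext i
    apply le_antisymm (hkerpos x hx hxt i)
    have := hkerpos (-x) (fun i hi => by rw [Matrix.mulVec_neg]; simp [hx i hi])
      (by rw [Matrix.mulVec_neg]; simp [hxt]) i
    rw [Matrix.mulVec_neg] at this
    simpa using this
  obtain ⟨f, hf, hft, -, hdet⟩ := basis_rows (M.map (Int.cast : ℤ → ℚ)) ∅
    {i | (M *ᵥ v) i = 0 ∨ i = t} (by simp) (Set.empty_subset _) (by
      intro x hx
      obtain ⟨d, hd⟩ := IsLocalization.exist_integer_multiples_of_finite (nonZeroDivisors ℤ) x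
      choose z hz using hd
      have hd0 : ((d : ℤ) : ℚ) ≠ 0 := by
        have := nonZeroDivisors.coe_ne_zero d
        exact_mod_cast this
      have hz' : ∀ j, (z j : ℚ) = (d : ℤ) * x j := by
        intro j
        have := hz j
        simpa using this
      have hzrow : ∀ i, (M *ᵥ v) i = 0 ∨ i = t → (M *ᵥ z) i = 0 := by
        intro i hi
        have h1 := hx i hi
        have h2 : ((M *ᵥ z) i : ℚ) = (d : ℤ) * ∑ j, (M i j : ℚ) * x j := by
          simp only [Matrix.mulVec, dotProduct]
          push_cast
          rw [Finset.mul_sum]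
          exact Finset.sum_congr rfl fun j _ => by rw [hz' j]; ring
        simp only [Matrix.map_apply] at h1
        rw [h1, mul_zero] at h2
        exact_mod_cast h2
      have hz0 := hker z (fun i hi => hzrow i (Or.inl hi)) (hzrow t (Or.inr rfl))
      ext j
      have := hz' j
      rw [hz0] at this
      simp at this
      simpa using this)
  set E := M.submatrix f id with hE
  have hdetZ : E.det ≠ 0 := by
    intro h0
    apply hdet
    have : (M.map (Int.cast : ℤ → ℚ)).submatrix f id = E.map (Int.castRingHom ℚ) := by
      ext; simp [hE]
    rw [this, ← RingHom.mapMatrix_apply, ← RingHom.map_det, h0]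
    simp
  have hEv : ∀ j, (E *ᵥ v) j = (M *ᵥ v) (f j) := fun j => rfl
  obtain ⟨j0, hj0⟩ : ∃ j, f j = t := by
    by_contra h
    push Not at h
    have h0 : E *ᵥ v = 0 := by
      ext j
      rw [hEv]
      exact (hft j).resolve_right (h j)
    exact hv0 (Matrix.eq_zero_of_mulVec_eq_zero hdetZ h0)
  have hEv' : E *ᵥ v = Pi.single j0 ((M *ᵥ v) t) := by
    ext j
    rw [hEv]
    by_cases h : j = j0
    · subst h; simp [hj0]
    · rw [Pi.single_eq_of_ne h]
      exact (hft j).resolve_right (fun h' => h (hf (h'.trans hj0.symm)))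
  have hadj : ∀ q, E.det * v q = E.adjugate q j0 * (M *ᵥ v) t := by
    intro q
    have h1 : E.adjugate *ᵥ (E *ᵥ v) = E.det • v := by
      rw [Matrix.mulVec_mulVec, Matrix.adjugate_mul, Matrix.smul_mulVec, Matrix.one_mulVec]
    rw [hEv'] at h1
    have := congrFun h1 q
    simp at this
    linarith
  -- the ray
  let r : Fin n → ℤ := fun q => E.det.sign * E.adjugate q j0
  have hr : |E.det| • v = (M *ᵥ v) t • r := by
    ext q
    have h1 := hadj q
    have h2 : E.det.sign * E.det = |E.det| := Int.sign_mul_self_eq_abs _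
    simp only [Pi.smul_apply, smul_eq_mul, r]
    rw [← h2, mul_assoc, h1]; ring
  have hMr : ∀ i, |E.det| * (M *ᵥ v) i = (M *ᵥ v) t * (M *ᵥ r) i := by
    intro i
    have := congrFun (congrArg (fun z => M *ᵥ z) hr) i
    simp only [Matrix.mulVec_smul] at this
    simpa using this
  refine ⟨r, ?_, ?_, ?_, ?_⟩
  · intro h0
    rw [h0, smul_zero] at hr
    rcases smul_eq_zero.mp hr with h | h
    · exact hdetZ (abs_eq_zero.mp h)
    · exact hv0 h
  · intro i
    have h1 : 0 ≤ (M *ᵥ v) t * (M *ᵥ r) i := by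
      rw [← hMr]; exact mul_nonneg (abs_nonneg _) (hv i)
    exact nonneg_of_mul_nonneg_right h1 htpos
  · intro i hi
    have := hMr i
    rw [hvS i hi, mul_zero] at this
    exact (mul_eq_zero.mp this.symm).resolve_left ht
  · intro i
    have hrq : ∀ q, |r q| ≤ (n.factorial * β ^ n : ℕ) := by
      intro q
      simp only [r, abs_mul]
      rw [Int.abs_sign_of_ne_zero hdetZ, one_mul]
      exact adj_bound E β hβ (fun a b => hMβ _ _) q j0
    calc (M *ᵥ r) i = ∑ q, M i q * r q := rfl
      _ ≤ ∑ q : Fin n, ((β * (n.factorial * β ^ n) : ℕ) : ℤ) := by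
        refine Finset.sum_le_sum fun q _ => ?_
        refine (le_abs_self _).trans ?_
        rw [abs_mul]
        push_cast
        have := hrq q
        push_cast at this
        exact mul_le_mul (hMβ i q) this (abs_nonneg _) (by positivity)
      _ = _ := by simp

lemma rat_bounds {m n : ℕ} (A : Matrix (Fin m) (Fin n) ℚ) (φ : ℕ)
    (hcol : ∀ j, vecSize (fun i => A i j) ≤ φ) :
    ∃ (d : Fin n → ℕ) (A' : Matrix (Fin m) (Fin n) ℤ), (∀ j, 1 ≤ d j ∧ d j ≤ 2 ^ φ) ∧
      (∀ i j, |A' i j| ≤ (2 ^ φ : ℕ)) ∧ ∀ i j, (A' i j : ℚ) = A i j * d j := by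
  classical
  let g : Fin n → Fin m → ℕ := fun j i => ((A i j).num.natAbs + 1) * (A i j).den
  have hg : ∀ j i, g j i ≤ 2 ^ ratSize (A i j) := by
    intro j i
    have h1 : (A i j).num.natAbs + 1 ≤ 2 ^ Nat.clog 2 ((A i j).num.natAbs + 1) :=
      Nat.le_pow_clog (by norm_num) _
    have h2 : (A i j).den + 1 ≤ 2 ^ Nat.clog 2 ((A i j).den + 1) :=
      Nat.le_pow_clog (by norm_num) _
    have h3 : g j i ≤ 2 ^ Nat.clog 2 ((A i j).num.natAbs + 1) * 2 ^ Nat.clog 2 ((A i j).den + 1) :=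
      Nat.mul_le_mul h1 (by omega)
    refine h3.trans ?_
    rw [← pow_add]
    apply Nat.pow_le_pow_right (by norm_num)
    unfold ratSize; omega
  have hgp : ∀ j, ∏ i, g j i ≤ 2 ^ φ := by
    intro j
    calc ∏ i, g j i ≤ ∏ i, 2 ^ ratSize (A i j) := Finset.prod_le_prod' fun i _ => hg j i
      _ = 2 ^ ∑ i, ratSize (A i j) := Finset.prod_pow_eq_pow_sum _ _ _
      _ ≤ 2 ^ φ := by
        apply Nat.pow_le_pow_right (by norm_num)
        have := hcol j
        unfold vecSize at this
        exact (Nat.le_add_left _ _).trans this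
  have hdg : ∀ j i, (A i j).den ≤ g j i := fun j i => Nat.le_mul_of_pos_left _ (by omega)
  refine ⟨fun j => ∏ i, (A i j).den,
    fun i j => (A i j).num * ((∏ i' ∈ Finset.univ.erase i, (A i' j).den : ℕ) : ℤ), ?_, ?_, ?_⟩
  · intro j
    exact ⟨Finset.one_le_prod' fun i _ => (A i j).den_pos,
      (Finset.prod_le_prod' fun i _ => hdg j i).trans (hgp j)⟩
  · intro i j
    rw [abs_mul, Int.abs_eq_natAbs, Nat.abs_cast, ← Nat.cast_mul, Nat.cast_le]
    refine le_trans ?_ (hgp j)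
    rw [← Finset.mul_prod_erase _ _ (Finset.mem_univ i)]
    refine Nat.mul_le_mul ?_ (Finset.prod_le_prod' fun i _ => hdg j i)
    have := (A i j).den_pos
    calc (A i j).num.natAbs ≤ (A i j).num.natAbs + 1 := by omega
      _ ≤ _ := Nat.le_mul_of_pos_right _ this
  · intro i j
    simp only []
    rw [← Finset.mul_prod_erase _ _ (Finset.mem_univ i)]
    push_cast
    rw [← mul_assoc, Rat.mul_den_eq_num]

lemma scaled_inv {m n : ℕ} (A : Matrix (Fin m) (Fin n) ℚ) (φ : ℕ)
    (hcol : ∀ j, vecSize (fun i => A i j) ≤ φ) (f : Fin n → Fin m)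
    (hdet : (A.submatrix f id).det ≠ 0) :
    ∃ (N : Matrix (Fin n) (Fin n) ℤ) (κ : ℚ), 0 < κ ∧
      (∀ s q, (N s q : ℚ) = κ * (A.submatrix f id)⁻¹ q s) ∧
      ∀ s q, |N s q| ≤ (2 ^ φ * (n.factorial * (2 ^ φ) ^ n) : ℕ) := by
  classical
  obtain ⟨d, A', hd, hA', hAA'⟩ := rat_bounds A φ hcol
  set E : Matrix (Fin n) (Fin n) ℤ := A'.submatrix f id with hE
  have hEq : E.map (Int.castRingHom ℚ) = A.submatrix f id * Matrix.diagonal (fun j => (d j : ℚ)) := by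
    ext i j
    rw [Matrix.mul_diagonal]
    simpa [hE] using hAA' (f i) j
  have hdetE : ((E.det : ℤ) : ℚ) = (A.submatrix f id).det * ∏ j, (d j : ℚ) := by
    have h1 := congrArg Matrix.det hEq
    rw [Matrix.det_mul, Matrix.det_diagonal, ← RingHom.mapMatrix_apply, ← RingHom.map_det] at h1
    simpa using h1
  have hE0 : E.det ≠ 0 := by
    intro h0
    rw [h0] at hdetE
    have : ∏ j, (d j : ℚ) ≠ 0 := Finset.prod_ne_zero_iff.mpr fun j _ => by
      have := (hd j).1
      positivity
    exact (mul_ne_zero hdet this) (by simpa using hdetE.symm)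
  have hEQ0 : ((E.det : ℤ) : ℚ) ≠ 0 := by exact_mod_cast hE0
  have hinv : (A.submatrix f id)⁻¹ =
      ((E.det : ℤ) : ℚ)⁻¹ • (Matrix.diagonal (fun j => (d j : ℚ)) *
        (E.adjugate).map (Int.castRingHom ℚ)) := by
    apply Matrix.inv_eq_right_inv
    rw [Matrix.mul_smul, ← Matrix.mul_assoc, ← hEq, ← Matrix.map_mul, Matrix.mul_adjugate]
    ext i j
    by_cases h : i = j
    · subst h
      simp only [Matrix.smul_apply, Matrix.map_apply, Matrix.one_apply_eq, smul_eq_mul, mul_one,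
        eq_intCast]
      exact inv_mul_cancel₀ hEQ0
    · simp only [Matrix.smul_apply, Matrix.map_apply, Matrix.one_apply_ne h, smul_eq_mul,
        mul_zero, eq_intCast, Int.cast_zero]
  refine ⟨fun s q => E.det.sign * (d q * E.adjugate q s), ((|E.det| : ℤ) : ℚ), ?_, ?_, ?_⟩
  · exact_mod_cast abs_pos.mpr hE0
  · intro s q
    rw [hinv, ← Int.sign_mul_self_eq_abs]
    simp only [Matrix.smul_apply, Matrix.diagonal_mul, Matrix.map_apply, smul_eq_mul]
    simp only [eq_intCast, Int.cast_mul, Int.cast_natCast]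
    field_simp
  · intro s q
    rw [abs_mul, Int.abs_sign_of_ne_zero hE0, one_mul, abs_mul, Nat.abs_cast, Nat.cast_mul]
    exact mul_le_mul (by exact_mod_cast (hd q).2)
      (adj_bound E (2 ^ φ) Nat.one_le_two_pow (fun a b => hA' _ _) q s) (abs_nonneg _)
      (by positivity)

lemma numeric (n φ : ℕ) (hn : 1 ≤ n) (hφ : n ≤ φ) :
    (((n * ((2 ^ φ * (n.factorial * (2 ^ φ) ^ n)) * (n.factorial *
      (2 ^ φ * (n.factorial * (2 ^ φ) ^ n)) ^ n))) ^ n : ℕ).size + 1) ≤ 24 * n ^ 5 * φ := by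
  have h1 : n ≤ 2 ^ φ := hφ.trans Nat.lt_two_pow_self.le
  have h2 : n.factorial ≤ 2 ^ (φ * n) := by
    rw [pow_mul]
    exact (Nat.factorial_le_pow n).trans (Nat.pow_le_pow_left h1 n)
  have h3 : 2 ^ φ * (n.factorial * (2 ^ φ) ^ n) ≤ 2 ^ (φ + (φ * n + φ * n)) := by
    rw [pow_add, pow_add, ← pow_mul]
    gcongr
  set β := 2 ^ φ * (n.factorial * (2 ^ φ) ^ n)
  have h4 : n * (β * (n.factorial * β ^ n)) ≤
      2 ^ (φ + ((φ + (φ * n + φ * n)) + (φ * n + (φ + (φ * n + φ * n)) * n))) := by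
    rw [pow_add 2 φ, pow_add, pow_add 2 (φ * n), pow_mul 2 (φ + (φ * n + φ * n)) n]
    gcongr
  have h5 := Nat.pow_le_pow_left h4 n
  rw [← pow_mul] at h5
  have h6 := Nat.size_le_size h5
  rw [Nat.size_pow] at h6
  set e := (φ + ((φ + (φ * n + φ * n)) + (φ * n + (φ + (φ * n + φ * n)) * n))) * n with he
  have h7 : e = 2 * (φ * n) + 4 * (φ * n ^ 2) + 2 * (φ * n ^ 3) := by rw [he]; ring
  have a1 : φ * n ≤ φ * n ^ 5 := Nat.mul_le_mul_left _ (Nat.le_self_pow (by norm_num) n)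
  have a2 : φ * n ^ 2 ≤ φ * n ^ 5 := Nat.mul_le_mul_left _ (Nat.pow_le_pow_right hn (by norm_num))
  have a3 : φ * n ^ 3 ≤ φ * n ^ 5 := Nat.mul_le_mul_left _ (Nat.pow_le_pow_right hn (by norm_num))
  have a4 : 1 ≤ φ * n ^ 5 := Nat.mul_pos (by omega) (Nat.pow_pos hn)
  have a5 : 24 * n ^ 5 * φ = 24 * (φ * n ^ 5) := by ring
  omega

/-- The rational linear map `b ↦ A_f⁻¹ b_f`. -/
noncomputable def vertMap {m n : ℕ} (A : Matrix (Fin m) (Fin n) ℚ) (f : Fin n → Fin m) :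
    Matrix (Fin n) (Fin m) ℚ :=
  fun q i => ∑ s, if f s = i then (A.submatrix f id)⁻¹ q s else 0

/-- The multipliers `c A_f⁻¹`. -/
noncomputable def mult {m n : ℕ} (A : Matrix (Fin m) (Fin n) ℚ) (f : Fin n → Fin m)
    (c : Fin n → ℤ) (s : Fin n) : ℚ :=
  ∑ q, (c q : ℚ) * (A.submatrix f id)⁻¹ q s

lemma applyRat_vertMap {m n : ℕ} (A : Matrix (Fin m) (Fin n) ℚ) (f : Fin n → Fin m)
    (b : Fin m → ℝ) (q : Fin n) :
    applyRat (vertMap A f) b q = ∑ s, (((A.submatrix f id)⁻¹ q s : ℚ) : ℝ) * b (f s) := by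
  simp only [applyRat, Matrix.mulVec, dotProduct, Matrix.map_apply, vertMap, Rat.cast_sum,
    Finset.sum_mul]
  rw [Finset.sum_comm]
  refine Finset.sum_congr rfl fun s _ => ?_
  rw [Finset.sum_eq_single (f s)]
  · simp
  · intro i _ hi
    simp [Ne.symm hi]
  · simp

lemma dot_vertMap {m n : ℕ} (A : Matrix (Fin m) (Fin n) ℚ) (f : Fin n → Fin m)
    (b : Fin m → ℝ) (c : Fin n → ℤ) :
    ∑ q, (c q : ℝ) * applyRat (vertMap A f) b q = ∑ s, (mult A f c s : ℝ) * b (f s) := by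
  simp only [applyRat_vertMap, Finset.mul_sum, mult]
  rw [Finset.sum_comm]
  refine Finset.sum_congr rfl fun s _ => ?_
  push_cast
  rw [Finset.sum_mul]
  exact Finset.sum_congr rfl fun q _ => by ring

lemma mult_spec {m n : ℕ} (A : Matrix (Fin m) (Fin n) ℚ) (f : Fin n → Fin m)
    (hdet : (A.submatrix f id).det ≠ 0) (c : Fin n → ℤ) (j : Fin n) :
    ∑ s, mult A f c s * A (f s) j = c j := by
  have h1 : (A.submatrix f id)⁻¹ * A.submatrix f id = 1 :=
    Matrix.nonsing_inv_mul _ (isUnit_iff_ne_zero.mpr hdet)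
  have h2 : (fun s => mult A f c s) = (fun q => (c q : ℚ)) ᵥ* (A.submatrix f id)⁻¹ := by
    ext s; rfl
  have h3 : (fun s => mult A f c s) ᵥ* A.submatrix f id = fun q => (c q : ℚ) := by
    rw [h2, Matrix.vecMul_vecMul, h1, Matrix.vecMul_one]
  exact congrFun h3 j

lemma mult_unique {m n : ℕ} (A : Matrix (Fin m) (Fin n) ℚ) (f : Fin n → Fin m)
    (hdet : (A.submatrix f id).det ≠ 0) (c : Fin n → ℤ) (y : Fin n → ℝ)
    (hy : ∀ j, ∑ s, y s * (A (f s) j : ℝ) = c j) (s : Fin n) : y s = (mult A f c s : ℝ) := by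
  have h1 : A.submatrix f id * (A.submatrix f id)⁻¹ = 1 :=
    Matrix.mul_nonsing_inv _ (isUnit_iff_ne_zero.mpr hdet)
  have h2 : ∀ a b, ∑ j, (A (f a) j : ℝ) * (((A.submatrix f id)⁻¹ j b : ℚ) : ℝ) =
      if a = b then 1 else 0 := by
    intro a b
    have := congrFun (congrFun h1 a) b
    rw [Matrix.mul_apply, Matrix.one_apply] at this
    have h3 := congrArg (Rat.cast : ℚ → ℝ) this
    rw [apply_ite (Rat.cast : ℚ → ℝ)] at h3
    push_cast at h3
    simpa using h3
  have : (mult A f c s : ℝ) = ∑ a, y a * if a = s then 1 else 0 := by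
    simp only [← h2, mult]
    push_cast
    simp only [← hy, Finset.sum_mul, Finset.mul_sum]
    rw [Finset.sum_comm]
    exact Finset.sum_congr rfl fun _ _ => Finset.sum_congr rfl fun _ _ => by ring
  rw [this]
  simp

lemma mult_neg {m n : ℕ} (A : Matrix (Fin m) (Fin n) ℚ) (f : Fin n → Fin m)
    (c : Fin n → ℤ) (s : Fin n) : mult A f (-c) s = - mult A f c s := by
  simp [mult]

lemma weak_dual {m n : ℕ} (A : Matrix (Fin m) (Fin n) ℚ) (f : Fin n → Fin m)
    (hdet : (A.submatrix f id).det ≠ 0) (c : Fin n → ℤ) (hc : ∀ s, 0 ≤ mult A f c s)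
    (b : Fin m → ℝ) (x : Fin n → ℝ) (hx : x ∈ Pb A b) :
    ∑ q, (c q : ℝ) * x q ≤ ∑ q, (c q : ℝ) * applyRat (vertMap A f) b q := by
  rw [dot_vertMap]
  have h1 : ∀ j, (c j : ℝ) = ∑ s, (mult A f c s : ℝ) * (A (f s) j : ℝ) := by
    intro j
    have := mult_spec A f hdet c j
    exact_mod_cast this.symm
  have : ∑ q, (c q : ℝ) * x q = ∑ s, (mult A f c s : ℝ) * ∑ j, (A (f s) j : ℝ) * x j := by
    simp only [h1, Finset.sum_mul, Finset.mul_sum]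
    rw [Finset.sum_comm]
    exact Finset.sum_congr rfl fun _ _ => Finset.sum_congr rfl fun _ _ => by ring
  rw [this]
  exact Finset.sum_le_sum fun s _ => mul_le_mul_of_nonneg_left (hx (f s))
    (by exact_mod_cast hc s)

lemma weak_dual' {m n : ℕ} (A : Matrix (Fin m) (Fin n) ℚ) (f : Fin n → Fin m)
    (hdet : (A.submatrix f id).det ≠ 0) (c : Fin n → ℤ) (hc : ∀ s, mult A f c s ≤ 0)
    (b : Fin m → ℝ) (x : Fin n → ℝ) (hx : x ∈ Pb A b) :
    ∑ q, (c q : ℝ) * applyRat (vertMap A f) b q ≤ ∑ q, (c q : ℝ) * x q := by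
  have := weak_dual A f hdet (-c) (fun s => by rw [mult_neg]; linarith [hc s]) b x hx
  simp at this
  linarith

lemma real_ker {m n : ℕ} (A : Matrix (Fin m) (Fin n) ℚ) (hrank : A.rank = n) :
    ∀ x : Fin n → ℝ, (∀ i, ∑ j, (A.map (Rat.cast : ℚ → ℝ)) i j * x j = 0) → x = 0 := by
  have hinj : Function.Injective A.mulVecLin := by
    rw [← LinearMap.ker_eq_bot, ← Submodule.finrank_eq_zero]
    have h1 := LinearMap.finrank_range_add_finrank_ker A.mulVecLin
    have h2 : Module.finrank ℚ (LinearMap.range A.mulVecLin) = n := hrank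
    simp only [Module.finrank_fin_fun] at h1
    omega
  obtain ⟨f, -, -, -, hdet⟩ := basis_rows A ∅ Set.univ (by simp) (Set.empty_subset _) (by
    intro x hx
    apply hinj
    rw [map_zero]
    ext i
    exact hx i trivial)
  intro x hx
  have hdetR : ((A.submatrix f id).map (Rat.castHom ℝ)).det ≠ 0 := by
    rw [← RingHom.mapMatrix_apply, ← RingHom.map_det]
    simpa using hdet
  apply Matrix.eq_zero_of_mulVec_eq_zero hdetR
  ext s
  exact hx (f s)

lemma opt_basis {m n : ℕ} (A : Matrix (Fin m) (Fin n) ℚ) (hrank : A.rank = n) (b : Fin m → ℝ)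
    (hne : (Pb A b).Nonempty) (c : Fin n → ℤ) (δ : ℝ)
    (hub : ∀ δ' : ℝ, (∀ x ∈ Pb A b, ∑ j, (c j : ℝ) * x j ≤ δ') ↔ δ ≤ δ') :
    ∃ f : Fin n → Fin m, (A.submatrix f id).det ≠ 0 ∧ (∀ s, 0 ≤ mult A f c s) ∧
      ∑ q, (c q : ℝ) * applyRat (vertMap A f) b q = δ := by
  obtain ⟨x0, hx0⟩ := hne
  obtain ⟨f, y, hdet, hy, hyc, hyb⟩ := basic_opt (A.map (Rat.cast : ℚ → ℝ)) b
    (fun j => (c j : ℝ)) δ (real_ker A hrank) x0 hx0 hub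
  have hdetQ : (A.submatrix f id).det ≠ 0 := by
    intro h0
    apply hdet
    have : (A.map (Rat.cast : ℚ → ℝ)).submatrix f id =
        (A.submatrix f id).map (Rat.castHom ℝ) := by ext; simp
    rw [this, ← RingHom.mapMatrix_apply, ← RingHom.map_det, h0, map_zero]
  have hu := mult_unique A f hdetQ c y hyc
  refine ⟨f, hdetQ, fun s => ?_, ?_⟩
  · have := hy s
    rw [hu s] at this
    exact_mod_cast this
  · rw [dot_vertMap, ← hyb]
    exact Finset.sum_congr rfl fun s _ => by rw [hu s]

lemma width_basis {m n : ℕ} (A : Matrix (Fin m) (Fin n) ℚ) (hrank : A.rank = n) (b : Fin m → ℝ)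
    (hne : (Pb A b).Nonempty) (c : Fin n → ℤ)
    (hfin : widthAlong (Pb A b) (fun q => (c q : ℝ)) ≠ ⊤) :
    ∃ f g : Fin n → Fin m, (A.submatrix f id).det ≠ 0 ∧ (A.submatrix g id).det ≠ 0 ∧
      (∀ s, 0 ≤ mult A f c s) ∧ (∀ s, mult A g c s ≤ 0) ∧
      widthAlong (Pb A b) (fun q => (c q : ℝ)) =
        ((∑ q, (c q : ℝ) * (applyRat (vertMap A f) b q - applyRat (vertMap A g) b q) : ℝ) :
          EReal) := by
  obtain ⟨x0, hx0⟩ := hne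
  unfold widthAlong at hfin ⊢
  set S := (fun x : Fin n → ℝ => ((∑ i, (c i : ℝ) * x i : ℝ) : EReal)) '' Pb A b with hS
  have hmem : ((∑ i, (c i : ℝ) * x0 i : ℝ) : EReal) ∈ S := ⟨x0, hx0, rfl⟩
  have h1 : sSup S ≠ ⊥ := fun h => by
    have := le_sSup hmem
    rw [h, le_bot_iff] at this
    exact EReal.coe_ne_bot _ this
  have h2 : sInf S ≠ ⊤ := fun h => by
    have := sInf_le hmem
    rw [h, top_le_iff] at this
    exact EReal.coe_ne_top _ this
  have h3 : sSup S ≠ ⊤ := fun h => by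
    rw [h] at hfin
    exact hfin (EReal.top_sub h2)
  have h4 : sInf S ≠ ⊥ := fun h => by
    rw [h] at hfin
    apply hfin
    rw [sub_eq_add_neg, EReal.neg_bot, EReal.add_top_of_ne_bot h1]
  have e1 := EReal.coe_toReal h3 h1
  have e2 := EReal.coe_toReal h2 h4
  set δ := (sSup S).toReal
  set γ := (sInf S).toReal
  obtain ⟨f, hf, hfm, hfδ⟩ := opt_basis A hrank b ⟨x0, hx0⟩ c δ (by
    intro δ'
    rw [← EReal.coe_le_coe_iff, e1, sSup_le_iff]
    simp only [hS, Set.forall_mem_image, EReal.coe_le_coe_iff])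
  obtain ⟨g, hg, hgm, hgδ⟩ := opt_basis A hrank b ⟨x0, hx0⟩ (-c) (-γ) (by
    intro δ'
    rw [neg_le, ← EReal.coe_le_coe_iff, e2, le_sInf_iff]
    simp only [hS, Set.forall_mem_image, EReal.coe_le_coe_iff]
    refine forall₂_congr fun x _ => ?_
    simp [neg_le])
  refine ⟨f, g, hf, hg, hfm, fun s => ?_, ?_⟩
  · have := hgm s
    rw [mult_neg] at this
    linarith
  · rw [← e1, ← e2, ← EReal.coe_sub, EReal.coe_eq_coe_iff]
    simp at hgδ
    simp only [mul_sub, Finset.sum_sub_distrib]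
    rw [hfδ, hgδ]

lemma width_le {m n : ℕ} (A : Matrix (Fin m) (Fin n) ℚ) (b : Fin m → ℝ)
    (c : Fin n → ℤ) (lo hi : ℝ)
    (h : ∀ x ∈ Pb A b, lo ≤ ∑ q, (c q : ℝ) * x q ∧ ∑ q, (c q : ℝ) * x q ≤ hi) :
    widthAlong (Pb A b) (fun q => (c q : ℝ)) ≤ ((hi - lo : ℝ) : EReal) := by
  unfold widthAlong
  rw [EReal.coe_sub]
  apply EReal.sub_le_sub
  · apply sSup_le
    rintro _ ⟨x, hx, rfl⟩
    exact EReal.coe_le_coe_iff.mpr (h x hx).2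
  · apply le_sInf
    rintro _ ⟨x, hx, rfl⟩
    exact EReal.coe_le_coe_iff.mpr (h x hx).1

/-- Directions for one pair of bases. -/
lemma pair_dirs {m n : ℕ} (A : Matrix (Fin m) (Fin n) ℚ) (φ : ℕ) (hn : 1 ≤ n) (hnφ : n ≤ φ)
    (hcol : ∀ j, vecSize (fun i => A i j) ≤ φ) (f g : Fin n → Fin m)
    (hf : (A.submatrix f id).det ≠ 0) (hg : (A.submatrix g id).det ≠ 0) :
    ∃ T : Finset (Fin n → ℤ), T.card ≤ (2 * n) ^ n * (24 * n ^ 5 * φ) ^ (n - 1) ∧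
      (∀ s ∈ T, s ≠ 0 ∧ (∀ i, 0 ≤ mult A f s i) ∧ ∀ i, mult A g s i ≤ 0) ∧
      ∀ ℓ : (Fin n → ℤ) →+ ℝ,
        (∀ c, (∀ i, 0 ≤ mult A f c i) → (∀ i, mult A g c i ≤ 0) → 0 ≤ ℓ c) →
        ∀ c, c ≠ 0 → (∀ i, 0 ≤ mult A f c i) → (∀ i, mult A g c i ≤ 0) →
          ∃ s ∈ T, ℓ s ≤ ℓ c := by
  obtain ⟨n', rfl⟩ : ∃ n', n = n' + 1 := ⟨n - 1, by omega⟩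
  obtain ⟨N1, κ1, hκ1, hN1, hb1⟩ := scaled_inv A φ hcol f hf
  obtain ⟨N2, κ2, hκ2, hN2, hb2⟩ := scaled_inv A φ hcol g hg
  set β := 2 ^ φ * ((n' + 1).factorial * (2 ^ φ) ^ (n' + 1)) with hβ
  have hβ1 : 1 ≤ β := Nat.mul_pos (by positivity)
    (Nat.mul_pos (Nat.factorial_pos _) (by positivity))
  let M : Matrix (Fin (n' + 1) ⊕ Fin (n' + 1)) (Fin (n' + 1)) ℤ :=
    Sum.elim (fun s q => N1 s q) (fun s q => - N2 s q)
  have hM1 : ∀ c s, ((M *ᵥ c) (Sum.inl s) : ℚ) = κ1 * mult A f c s := by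
    intro c s
    have : (M *ᵥ c) (Sum.inl s) = ∑ q, N1 s q * c q := rfl
    rw [this, mult, Finset.mul_sum]
    push_cast
    exact Finset.sum_congr rfl fun q _ => by rw [hN1]; ring
  have hM2 : ∀ c s, ((M *ᵥ c) (Sum.inr s) : ℚ) = κ2 * (- mult A g c s) := by
    intro c s
    have : (M *ᵥ c) (Sum.inr s) = ∑ q, - N2 s q * c q := rfl
    rw [this, mult, ← Finset.sum_neg_distrib, Finset.mul_sum]
    push_cast
    exact Finset.sum_congr rfl fun q _ => by rw [hN2]; ring
  have hC : ∀ c, (∀ i, 0 ≤ (M *ᵥ c) i) ↔ (∀ i, 0 ≤ mult A f c i) ∧ ∀ i, mult A g c i ≤ 0 := by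
    intro c
    rw [Sum.forall]
    refine and_congr (forall_congr' fun s => ?_) (forall_congr' fun s => ?_)
    · rw [← Int.cast_nonneg_iff (R := ℚ), hM1, mul_nonneg_iff_of_pos_left hκ1]
    · rw [← Int.cast_nonneg_iff (R := ℚ), hM2, mul_nonneg_iff_of_pos_left hκ2]
      exact neg_nonneg
  have hMker : ∀ x : Fin (n' + 1) → ℤ, M *ᵥ x = 0 → x = 0 := by
    intro x hx
    have h0 : ∀ s, mult A f x s = 0 := by
      intro s
      have := hM1 x s
      rw [hx] at this
      simp at this
      exact this.resolve_left hκ1.ne'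
    ext j
    have := mult_spec A f hf x j
    simp only [h0, zero_mul, Finset.sum_const_zero] at this
    exact_mod_cast this.symm
  have hMβ : ∀ i j, |M i j| ≤ β := by
    rintro (i | i) j
    · exact hb1 i j
    · change |- N2 i j| ≤ _
      rw [abs_neg]; exact hb2 i j
  obtain ⟨T, hT1, hT2, hT3⟩ := core M hMker
    ((n' + 1) * (β * ((n' + 1).factorial * β ^ (n' + 1))))
    (Nat.mul_pos (by omega) (Nat.mul_pos hβ1 (Nat.mul_pos (Nat.factorial_pos _)
      (Nat.pow_pos hβ1))))
    (fun S hS => bounded_ray M hMker β hβ1 hMβ S hS)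
  refine ⟨T, ?_, ?_, ?_⟩
  · refine hT1.trans ?_
    have hnum := numeric (n' + 1) φ hn hnφ
    rw [← hβ] at hnum
    have hc : Fintype.card (Fin (n' + 1) ⊕ Fin (n' + 1)) = 2 * (n' + 1) := by
      simp; ring
    rw [hc]
    exact Nat.mul_le_mul_left _ (Nat.pow_le_pow_left hnum _)
  · intro s hs
    exact ⟨(hT2 s hs).1, (hC s).mp (hT2 s hs).2⟩
  · intro ℓ hℓ c hc0 hc1 hc2
    exact hT3 ℓ (fun c hc => hℓ c ((hC c).mp hc).1 ((hC c).mp hc).2) c hc0 ((hC c).mpr ⟨hc1, hc2⟩)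

/-- Lemma 3.  For a full-column-rank matrix `A ∈ ℚ^{m×n}` defining a
parametric polyhedron of finite lattice width, there exist at most
`2 m^{2n} (2n+1)ⁿ (24 n⁵ φ)^{n-1}` triples `(Fᵢ, Gᵢ, cᵢ)` of rational linear maps and
nonzero integral directions such that, for every `b` with `P_b ≠ ∅`, each `cᵢ Gᵢ b` and
`cᵢ Fᵢ b` bound `cᵢ·x` on `P_b` from below and above, and the lattice width of `P_b` is
`min_i cᵢ (Fᵢ - Gᵢ) b`, attained along one of the directions `cᵢ`. -/
theorem width_directions_of_parametric_polyhedron {m n : ℕ}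
    (A : Matrix (Fin m) (Fin n) ℚ) (hrank : A.rank = n)
    (hfin : ∀ b : Fin m → ℝ, (Pb A b).Nonempty → latticeWidth (Pb A b) ≠ ⊤)
    (φ : ℕ) (hφ : φ = Finset.univ.sup fun j : Fin n => vecSize fun i : Fin m => A i j) :
    ∃ (t : ℕ) (F G : Fin t → Matrix (Fin n) (Fin m) ℚ) (c : Fin t → Fin n → ℤ),
      t ≤ 2 * m ^ (2 * n) * (2 * n + 1) ^ n * (24 * n ^ 5 * φ) ^ (n - 1) ∧
      (∀ i, c i ≠ 0) ∧
      ∀ b : Fin m → ℝ, (Pb A b).Nonempty →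
        (∀ i, ∀ x ∈ Pb A b,
          (∑ q, (c i q : ℝ) * applyRat (G i) b q) ≤ ∑ q, (c i q : ℝ) * x q ∧
          (∑ q, (c i q : ℝ) * x q) ≤ ∑ q, (c i q : ℝ) * applyRat (F i) b q) ∧
        (∀ i, latticeWidth (Pb A b) ≤
          ((∑ q, (c i q : ℝ) * (applyRat (F i) b q - applyRat (G i) b q) : ℝ) : EReal)) ∧
        (∃ i, latticeWidth (Pb A b) =
          ((∑ q, (c i q : ℝ) * (applyRat (F i) b q - applyRat (G i) b q) : ℝ) : EReal) ∧
          latticeWidth (Pb A b) = widthAlong (Pb A b) (fun q => (c i q : ℝ))) := by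
  classical
  rcases Nat.eq_zero_or_pos n with hn0 | hn
  · exfalso
    subst hn0
    apply hfin 0 ⟨0, fun i => by simp⟩
    unfold latticeWidth
    rw [sInf_eq_top]
    rintro w ⟨c, hc, -⟩
    exact absurd (Subsingleton.elim c 0) hc
  have hcol : ∀ j, vecSize (fun i => A i j) ≤ φ := by
    intro j
    rw [hφ]
    exact Finset.le_sup (f := fun j : Fin n => vecSize fun i : Fin m => A i j) (Finset.mem_univ j)
  have hnm : n ≤ m := by
    have := A.rank_le_height
    omega
  have hnφ : n ≤ φ := by
    have := hcol ⟨0, hn⟩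
    unfold vecSize at this
    exact hnm.trans ((Nat.le_add_right _ _).trans this)
  have hT : ∀ p : (Fin n → Fin m) × (Fin n → Fin m), ∃ T : Finset (Fin n → ℤ),
      T.card ≤ (2 * n) ^ n * (24 * n ^ 5 * φ) ^ (n - 1) ∧
      (T.Nonempty → (A.submatrix p.1 id).det ≠ 0 ∧ (A.submatrix p.2 id).det ≠ 0) ∧
      (∀ s ∈ T, s ≠ 0 ∧ (∀ i, 0 ≤ mult A p.1 s i) ∧ ∀ i, mult A p.2 s i ≤ 0) ∧
      ((A.submatrix p.1 id).det ≠ 0 → (A.submatrix p.2 id).det ≠ 0 →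
      ∀ ℓ : (Fin n → ℤ) →+ ℝ,
        (∀ c, (∀ i, 0 ≤ mult A p.1 c i) → (∀ i, mult A p.2 c i ≤ 0) → 0 ≤ ℓ c) →
        ∀ c, c ≠ 0 → (∀ i, 0 ≤ mult A p.1 c i) → (∀ i, mult A p.2 c i ≤ 0) →
          ∃ s ∈ T, ℓ s ≤ ℓ c) := by
    intro p
    by_cases h : (A.submatrix p.1 id).det ≠ 0 ∧ (A.submatrix p.2 id).det ≠ 0
    · obtain ⟨T, h1, h2, h3⟩ := pair_dirs A φ hn hnφ hcol p.1 p.2 h.1 h.2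
      exact ⟨T, h1, fun _ => h, h2, fun _ _ => h3⟩
    · exact ⟨∅, by simp, by simp, by simp, fun h1 h2 => absurd ⟨h1, h2⟩ h⟩
  choose T hT1 hT2 hT3 hT4 using hT
  let Ω : Finset (Σ _ : (Fin n → Fin m) × (Fin n → Fin m), Fin n → ℤ) := Finset.univ.sigma T
  let e := Ω.equivFin.symm
  have hmemT : ∀ i, (e i).1.2 ∈ T (e i).1.1 := fun i => (Finset.mem_sigma.mp (e i).2).2
  refine ⟨Ω.card, fun i => vertMap A (e i).1.1.1, fun i => vertMap A (e i).1.1.2,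
    fun i => (e i).1.2, ?_, fun i => (hT3 _ _ (hmemT i)).1, ?_⟩
  · rw [Finset.card_sigma]
    refine (Finset.sum_le_sum fun p _ => hT1 p).trans ?_
    rw [Finset.sum_const, Finset.card_univ, Fintype.card_prod, Fintype.card_fun, Fintype.card_fin,
      Fintype.card_fin, smul_eq_mul, ← pow_add, ← two_mul, ← mul_assoc]
    apply Nat.mul_le_mul_right
    have h1 : (2 * n) ^ n ≤ (2 * n + 1) ^ n := Nat.pow_le_pow_left (by omega) _
    refine Nat.mul_le_mul ?_ h1
    exact Nat.le_mul_of_pos_left _ (by norm_num)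
  intro b hb
  have ha : ∀ i, ∀ x ∈ Pb A b,
      (∑ q, ((e i).1.2 q : ℝ) * applyRat (vertMap A (e i).1.1.2) b q) ≤
        ∑ q, ((e i).1.2 q : ℝ) * x q ∧
      (∑ q, ((e i).1.2 q : ℝ) * x q) ≤
        ∑ q, ((e i).1.2 q : ℝ) * applyRat (vertMap A (e i).1.1.1) b q := by
    intro i x hx
    have hd := hT2 _ ⟨_, hmemT i⟩
    have hs := hT3 _ _ (hmemT i)
    exact ⟨weak_dual' A _ hd.2 _ hs.2.2 b x hx, weak_dual A _ hd.1 _ hs.2.1 b x hx⟩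
  let val : Fin Ω.card → ℝ := fun i =>
    ∑ q, ((e i).1.2 q : ℝ) * (applyRat (vertMap A (e i).1.1.1) b q -
      applyRat (vertMap A (e i).1.1.2) b q)
  have hwle : ∀ i, widthAlong (Pb A b) (fun q => ((e i).1.2 q : ℝ)) ≤ ((val i : ℝ) : EReal) := by
    intro i
    have := width_le A b (e i).1.2 _ _ (ha i)
    simpa only [val, mul_sub, Finset.sum_sub_distrib] using this
  have hlw : ∀ c : Fin n → ℤ, c ≠ 0 →
      latticeWidth (Pb A b) ≤ widthAlong (Pb A b) (fun q => (c q : ℝ)) :=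
    fun c hc => sInf_le ⟨c, hc, rfl⟩
  have hdom : ∀ c : Fin n → ℤ, c ≠ 0 → widthAlong (Pb A b) (fun q => (c q : ℝ)) ≠ ⊤ →
      ∃ i, ((val i : ℝ) : EReal) ≤ widthAlong (Pb A b) (fun q => (c q : ℝ)) := by
    intro c hc hfinc
    obtain ⟨f, g, hf, hg, hfm, hgm, hw⟩ := width_basis A hrank b hb c hfinc
    let ℓ : (Fin n → ℤ) →+ ℝ :=
      { toFun := fun c => ∑ q, (c q : ℝ) * (applyRat (vertMap A f) b q - applyRat (vertMap A g) b q)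
        map_zero' := by simp
        map_add' := by intro x y; simp [add_mul, Finset.sum_add_distrib] }
    obtain ⟨s, hs, hsc⟩ := hT4 (f, g) hf hg ℓ (by
      intro c h1 h2
      obtain ⟨x, hx⟩ := hb
      have h3 := weak_dual A f hf c h1 b x hx
      have h4 := weak_dual' A g hg c h2 b x hx
      change 0 ≤ ∑ q, (c q : ℝ) * (applyRat (vertMap A f) b q - applyRat (vertMap A g) b q)
      simp only [mul_sub, Finset.sum_sub_distrib]
      linarith) c hc hfm hgm
    have hmem : (⟨(f, g), s⟩ : Σ _ : (Fin n → Fin m) × (Fin n → Fin m), Fin n → ℤ) ∈ Ω :=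
      Finset.mem_sigma.mpr ⟨Finset.mem_univ _, hs⟩
    refine ⟨e.symm ⟨_, hmem⟩, ?_⟩
    rw [hw, EReal.coe_le_coe_iff]
    simp only [val, Equiv.apply_symm_apply]
    exact hsc
  have hc0 : ∃ c : Fin n → ℤ, c ≠ 0 ∧ widthAlong (Pb A b) (fun q => (c q : ℝ)) ≠ ⊤ := by
    by_contra hno
    push Not at hno
    apply hfin b hb
    unfold latticeWidth
    rw [sInf_eq_top]
    rintro w ⟨c, hc, rfl⟩
    exact hno c hc
  obtain ⟨c0, hc0, hc0f⟩ := hc0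
  obtain ⟨i0, -⟩ := hdom c0 hc0 hc0f
  have hupper : ∀ i, latticeWidth (Pb A b) ≤ ((val i : ℝ) : EReal) := fun i =>
    (hlw _ (hT3 _ _ (hmemT i)).1).trans (hwle i)
  refine ⟨ha, hupper, ?_⟩
  obtain ⟨i, -, hi⟩ := Finset.exists_min_image Finset.univ val ⟨i0, Finset.mem_univ _⟩
  have hlower : ((val i : ℝ) : EReal) ≤ latticeWidth (Pb A b) := by
    apply le_sInf
    rintro w ⟨c, hc, rfl⟩
    by_cases htop : widthAlong (Pb A b) (fun q => (c q : ℝ)) = ⊤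
    · rw [htop]; exact le_top
    · obtain ⟨k, hk⟩ := hdom c hc htop
      exact (EReal.coe_le_coe_iff.mpr (hi k (Finset.mem_univ _))).trans hk
  exact ⟨i, le_antisymm (hupper i) hlower,
    le_antisymm (hlw _ (hT3 _ _ (hmemT i)).1) ((hwle i).trans hlower)⟩
end

section
/- Let A ∈ ℚ^{m×n} be a matrix of full column rank defining a parametric polyhedron P of finite lattice width, and let Q ⊆ ℝ^m be a rational partially open polyhedron such that P_b is nonempty for all b ∈ Q. Then there exist a finite partition of Q into rational partially open polyhedra Q₁, …, Q_t and, for each i, a triple (F_i, G_i, c_i) of rational linear maps F_i, G_i : ℝ^m → ℝⁿ and a nonzero integral row vector c_i ∈ ℤⁿ such that for every b ∈ Q_i: min{c_i·x : x ∈ P_b} = c_i G_i b, max{c_i·x : x ∈ P_b} = c_i F_i b, and w(P_b) = w_{c_i}(P_b) = c_i (F_i − G_i) b. -/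
open Matrix Set

/-- A rational partially open polyhedron: an intersection of finitely many closed or
open halfspaces with rational data. -/
def IsRatPOPolyhedron {d : ℕ} (S : Set (Fin d → ℝ)) : Prop :=
  ∃ (k : ℕ) (a : Fin k → Fin d → ℚ) (β : Fin k → ℚ) (strict : Fin k → Bool),
    S = {x | ∀ i, if strict i then (∑ j, (a i j : ℝ) * x j) < (β i : ℝ)
                  else (∑ j, (a i j : ℝ) * x j) ≤ (β i : ℝ)}

theorem exists_between_real {ι : Type} [Fintype ι] (P N : ι → Prop) (up lo : ι → ℝ)
    (h : ∀ p q, P p → N q → lo q ≤ up p) :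
    ∃ x : ℝ, (∀ p, P p → x ≤ up p) ∧ (∀ q, N q → lo q ≤ x) := by
  classical
  by_cases hN : ∃ q, N q
  · obtain ⟨q0, hq0⟩ := hN
    obtain ⟨q, hq, hmax⟩ := Finset.exists_max_image (Finset.univ.filter N) lo
      ⟨q0, by simp [hq0]⟩
    refine ⟨lo q, fun p hp => h p q hp (by simpa using hq), fun q' hq' => hmax q' (by simp [hq'])⟩
  · by_cases hP : ∃ p, P p
    · obtain ⟨q0, hq0⟩ := hP
      obtain ⟨q, hq, hmin⟩ := Finset.exists_min_image (Finset.univ.filter P) up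
        ⟨q0, by simp [hq0]⟩
      exact ⟨up q, fun p hp => hmin p (by simp [hp]), fun q' hq' => absurd ⟨q', hq'⟩ hN⟩
    · exact ⟨0, fun p hp => absurd ⟨p, hp⟩ hP, fun r hr => absurd ⟨r, hr⟩ hN⟩

/-- The Farkas lemma, by Fourier-Motzkin elimination. -/
theorem farkas_aux : ∀ (n : ℕ) (ι : Type) [Fintype ι] (a : ι → Fin n → ℝ) (b : ι → ℝ),
    (∀ x : Fin n → ℝ, ∃ i, b i < ∑ j, a i j * x j) →
    ∃ y : ι → ℝ, (∀ i, 0 ≤ y i) ∧ (∀ j, ∑ i, y i * a i j = 0) ∧ ∑ i, y i * b i < 0 := by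
  intro n
  induction n with
  | zero =>
    intro ι _ a b h
    classical
    obtain ⟨i, hi⟩ := h 0
    refine ⟨Pi.single i 1, fun k => ?_, fun j => j.elim0, ?_⟩
    · by_cases hk : k = i
      · subst hk; simp
      · simp [hk]
    · simpa [Pi.single_apply] using hi
  | succ n ih =>
    intro ι _ a b h
    classical
    let u : ι × ι → ℝ := fun p =>
      if 0 < a p.1 0 ∧ a p.2 0 < 0 then - a p.2 0 else if a p.1 0 = 0 then 1 else 0
    let v : ι × ι → ℝ := fun p =>
      if 0 < a p.1 0 ∧ a p.2 0 < 0 then a p.1 0 else 0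
    have hu : ∀ p, 0 ≤ u p := by
      intro p; simp only [u]; split_ifs with h1 h2
      · linarith [h1.2]
      · exact zero_le_one
      · exact le_rfl
    have hv : ∀ p, 0 ≤ v p := by
      intro p; simp only [v]; split_ifs with h1
      · linarith [h1.1]
      · exact le_rfl
    have huv : ∀ p, u p * a p.1 0 + v p * a p.2 0 = 0 := by
      intro p; simp only [u, v]; split_ifs with h1 h2
      · ring
      · rw [h2]; ring
      · ring
    obtain ⟨y, hy0, hyA, hyb⟩ := ih (ι × ι)
      (fun p j => u p * a p.1 j.succ + v p * a p.2 j.succ)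
      (fun p => u p * b p.1 + v p * b p.2) (by
        intro x
        by_contra hcon
        push Not at hcon
        have key : ∀ p : ι × ι, u p * (∑ j, a p.1 (Fin.succ j) * x j)
            + v p * (∑ j, a p.2 (Fin.succ j) * x j) ≤ u p * b p.1 + v p * b p.2 := by
          intro p
          refine le_trans (le_of_eq ?_) (hcon p)
          rw [Finset.mul_sum, Finset.mul_sum, ← Finset.sum_add_distrib]
          exact Finset.sum_congr rfl fun j _ => by ring
        obtain ⟨t, ht1, ht2⟩ := exists_between_real (fun p => 0 < a p 0) (fun q => a q 0 < 0)
          (fun p => (b p - ∑ j, a p (Fin.succ j) * x j) / a p 0)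
          (fun p => (b p - ∑ j, a p (Fin.succ j) * x j) / a p 0) (by
            intro p q hp hq
            have := key (p, q)
            have hc : 0 < a p 0 ∧ a q 0 < 0 := ⟨hp, hq⟩
            simp only [u, v, if_pos hc] at this
            rw [div_le_iff_of_neg hq, div_mul_eq_mul_div, div_le_iff₀ hp]
            linarith)
        obtain ⟨i, hi⟩ := h (Fin.cons t x)
        simp only [Fin.sum_univ_succ, Fin.cons_zero, Fin.cons_succ] at hi
        rcases lt_trichotomy (a i 0) 0 with h0 | h0 | h0
        · have := ht2 i h0
          rw [div_le_iff_of_neg h0] at this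
          linarith
        · have := key (i, i)
          simp [u, v, h0] at this
          rw [h0] at hi
          linarith
        · have := ht1 i h0
          rw [le_div_iff₀ h0] at this
          linarith)
    have gen : ∀ f : ι → ℝ, ∑ i, ((∑ q, y (i, q) * u (i, q)) + ∑ p, y (p, i) * v (p, i)) * f i
        = ∑ p : ι × ι, y p * (u p * f p.1 + v p * f p.2) := by
      intro f
      rw [Fintype.sum_prod_type]
      simp only [add_mul, Finset.sum_mul, mul_add, Finset.sum_add_distrib]
      congr 1
      · exact Finset.sum_congr rfl fun i _ => Finset.sum_congr rfl fun j _ => by ring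
      · rw [Finset.sum_comm]
        exact Finset.sum_congr rfl fun i _ => Finset.sum_congr rfl fun j _ => by ring
    refine ⟨fun i => (∑ q, y (i, q) * u (i, q)) + ∑ p, y (p, i) * v (p, i), fun i => ?_, ?_, ?_⟩
    · exact add_nonneg (Finset.sum_nonneg fun q _ => mul_nonneg (hy0 _) (hu _))
        (Finset.sum_nonneg fun q _ => mul_nonneg (hy0 _) (hv _))
    · intro j
      rw [gen fun i => a i j]
      refine Fin.cases ?_ (fun j => ?_) j
      · simp [huv]
      · exact hyA j
    · rw [gen b]; exact hyb


/-- `y` is feasible for the dual linear program with objective `c`. -/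
def DualFeas {m n : ℕ} (A : Matrix (Fin m) (Fin n) ℚ) (c : Fin n → ℝ) (y : Fin m → ℝ) : Prop :=
  (∀ i, 0 ≤ y i) ∧ ∀ j, ∑ i, y i * (A i j : ℝ) = c j

theorem weak_duality {m n : ℕ} {A : Matrix (Fin m) (Fin n) ℚ} {c : Fin n → ℝ} {y : Fin m → ℝ}
    (hy : DualFeas A c y) {b : Fin m → ℝ} {x : Fin n → ℝ} (hx : x ∈ Pb A b) :
    ∑ j, c j * x j ≤ ∑ i, y i * b i := by
  calc ∑ j, c j * x j = ∑ i, y i * ∑ j, (A i j : ℝ) * x j := by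
        simp only [← hy.2, Finset.sum_mul, Finset.mul_sum]
        rw [Finset.sum_comm]
        exact Finset.sum_congr rfl fun i _ => Finset.sum_congr rfl fun j _ => by ring
    _ ≤ _ := Finset.sum_le_sum fun i _ => mul_le_mul_of_nonneg_left (hx i) (hy.1 i)

theorem basis_or_dep {m n : ℕ} (A : Matrix (Fin m) (Fin n) ℚ) (S : Finset (Fin m)) :
    (∃ R : Matrix (Fin n) (Fin m) ℚ, ∀ i ∈ S, ∀ k, ∑ j, A i j * R j k = if i = k then 1 else 0) ∨
    (∃ u : Fin m → ℚ, u ≠ 0 ∧ (∀ i, i ∉ S → u i = 0) ∧ ∀ j, ∑ i, u i * A i j = 0) := by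
  classical
  by_cases hLI : LinearIndependent ℚ (fun i : S => A i)
  · left
    have hinj := hLI
    rw [linearIndependent_iff_ker] at hinj
    obtain ⟨f, hf⟩ := LinearMap.exists_leftInverse_of_injective _ hinj
    refine ⟨fun j k => if hk : k ∈ S then f (Pi.single j 1) ⟨k, hk⟩ else 0, fun i hi k => ?_⟩
    by_cases hk : k ∈ S
    · simp only [hk, dif_pos]
      have h1 : f (A i) = Finsupp.single ⟨i, hi⟩ 1 := by
        have := LinearMap.congr_fun hf (Finsupp.single ⟨i, hi⟩ 1)
        simpa using this
      have h2 : A i = ∑ j, A i j • (Pi.single j 1 : Fin n → ℚ) := by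
        ext j; simp [Finset.sum_apply, Pi.single_apply]
      have h3 : f (A i) = ∑ j, A i j • f (Pi.single j 1) := by
        conv_lhs => rw [h2]
        simp
      have h4 := congrArg (fun g => g ⟨k, hk⟩) (h3.symm.trans h1)
      simpa [Finsupp.single_apply, Finsupp.finsetSum_apply] using h4
    · simp only [hk, dif_neg, not_false_eq_true, mul_zero, Finset.sum_const_zero]
      rw [if_neg]; rintro rfl; exact hk hi
  · right
    rw [Fintype.not_linearIndependent_iff] at hLI
    obtain ⟨g, hg, i, hi⟩ := hLI
    refine ⟨fun k => if hk : k ∈ S then g ⟨k, hk⟩ else 0, ?_, ?_, ?_⟩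
    · intro h
      have := congrFun h i
      simp at this; exact hi this
    · intro k hk; simp [hk]
    · intro j
      have := congrFun hg j
      simp only [Finset.sum_apply, Pi.smul_apply, smul_eq_mul, Pi.zero_apply] at this
      rw [← Finset.sum_subset (Finset.subset_univ S), ← Finset.sum_coe_sort S, ← this]
      · exact Finset.sum_congr rfl fun k _ => by simp
      · intro k _ hk; simp [hk]

theorem exists_direction {m n : ℕ} {A : Matrix (Fin m) (Fin n) ℚ} {b : Fin m → ℝ}
    (hne : (Pb A b).Nonempty) (u : Fin m → ℝ) (hu : u ≠ 0)
    (huA : ∀ j, ∑ i, u i * (A i j : ℝ) = 0) :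
    ∃ s : ℝ, ∑ i, s * u i * b i ≤ 0 ∧ ∃ i, s * u i < 0 := by
  obtain ⟨x, hx⟩ := hne
  have hpos : ∀ s : ℝ, (∀ i, 0 ≤ s * u i) → 0 ≤ ∑ i, s * u i * b i := by
    intro s hs
    have hD : DualFeas A 0 (fun i => s * u i) := ⟨hs, fun j => by
      simp only [mul_assoc, ← Finset.mul_sum, huA]; simp⟩
    simpa using weak_duality hD hx
  have hneg : ∑ i, (-1 : ℝ) * u i * b i = - ∑ i, (1 : ℝ) * u i * b i := by
    rw [← Finset.sum_neg_distrib]; exact Finset.sum_congr rfl fun i _ => by ring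
  by_cases h1 : ∃ i, (1 : ℝ) * u i < 0
  · by_cases h2 : ∑ i, (1 : ℝ) * u i * b i ≤ 0
    · exact ⟨1, h2, h1⟩
    · refine ⟨-1, by linarith, ?_⟩
      by_contra hc
      push Not at hc
      have := hpos (-1) hc
      linarith
  · push Not at h1
    have := hpos 1 h1
    refine ⟨-1, by linarith, ?_⟩
    by_contra hc
    push Not at hc
    apply hu
    ext i
    have := hc i
    have := h1 i
    simp only [Pi.zero_apply]; linarith

theorem exists_basic {m n : ℕ} (A : Matrix (Fin m) (Fin n) ℚ) :
    ∃ R : Finset (Fin m) → Matrix (Fin n) (Fin m) ℚ, ∀ b : Fin m → ℝ, (Pb A b).Nonempty →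
      ∀ (c : Fin n → ℝ) (y : Fin m → ℝ), DualFeas A c y →
      ∃ S, DualFeas A c (fun k => ∑ j, c j * (R S j k : ℝ)) ∧
        ∑ k, (∑ j, c j * (R S j k : ℝ)) * b k ≤ ∑ k, y k * b k := by
  classical
  have hR : ∀ S : Finset (Fin m), ∃ R : Matrix (Fin n) (Fin m) ℚ,
      (∀ i ∈ S, ∀ k, ∑ j, A i j * R j k = if i = k then 1 else 0) ∨
      (∃ u : Fin m → ℚ, u ≠ 0 ∧ (∀ i, i ∉ S → u i = 0) ∧ ∀ j, ∑ i, u i * A i j = 0) := by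
    intro S
    rcases basis_or_dep A S with ⟨R, h⟩ | h
    · exact ⟨R, Or.inl h⟩
    · exact ⟨0, Or.inr h⟩
  choose R hR using hR
  refine ⟨R, fun b hne c => ?_⟩
  have main : ∀ (N : ℕ) (y : Fin m → ℝ), (Finset.univ.filter fun i => y i ≠ 0).card ≤ N →
      DualFeas A c y →
      ∃ S, DualFeas A c (fun k => ∑ j, c j * (R S j k : ℝ)) ∧
        ∑ k, (∑ j, c j * (R S j k : ℝ)) * b k ≤ ∑ k, y k * b k := by
    intro N
    induction N using Nat.strong_induction_on with
    | _ N ih =>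
    intro y hN hy
    set S := Finset.univ.filter fun i => y i ≠ 0 with hS
    rcases hR S with h | ⟨u, hu0, huS, huA⟩
    · have hyk : (fun k => ∑ j, c j * (R S j k : ℝ)) = y := by
        ext k
        simp only [← hy.2, Finset.sum_mul]
        rw [Finset.sum_comm]
        have : ∀ i, ∑ j, y i * (A i j : ℝ) * (R S j k : ℝ) = if i = k then y k else 0 := by
          intro i
          by_cases hi : i ∈ S
          · have h1 := h i hi k
            have h2 : (∑ j, (A i j : ℝ) * (R S j k : ℝ)) = if i = k then 1 else 0 := by
              have h3 := congrArg (fun q : ℚ => (q : ℝ)) h1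
              simp only [Rat.cast_sum, Rat.cast_mul] at h3
              rw [h3]; split_ifs <;> simp
            simp only [mul_assoc, ← Finset.mul_sum, h2]
            split_ifs with hik
            · subst hik; simp
            · simp
          · have : y i = 0 := by simpa [hS] using hi
            simp only [this, zero_mul, Finset.sum_const_zero]
            split_ifs with hik
            · subst hik; exact this.symm
            · rfl
        simp [this]
      exact ⟨S, by rw [hyk]; exact hy, le_of_eq (by
        exact Finset.sum_congr rfl fun k _ => by rw [congrFun hyk k])⟩
    · have huA' : ∀ j, ∑ i, (u i : ℝ) * (A i j : ℝ) = 0 := by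
        intro j; exact_mod_cast congrArg (fun q : ℚ => (q : ℝ)) (huA j)
      obtain ⟨s, hs1, i1, hi1⟩ := exists_direction hne (fun i => (u i : ℝ)) (by
        intro h; apply hu0; ext i
        have := congrFun h i
        simpa using this) huA'
      obtain ⟨i0, hi0, hmin⟩ := Finset.exists_min_image
        (Finset.univ.filter fun i => s * (u i : ℝ) < 0) (fun i => y i / (-(s * (u i : ℝ))))
        ⟨i1, by simp [hi1]⟩
      have hi0 : s * (u i0 : ℝ) < 0 := by simpa using hi0
      set t := y i0 / (-(s * (u i0 : ℝ))) with ht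
      have ht0 : 0 ≤ t := div_nonneg (hy.1 _) (by linarith)
      have hD : DualFeas A c (fun i => y i + t * (s * u i)) := by
        refine ⟨fun i => ?_, fun j => ?_⟩
        · show 0 ≤ y i + t * (s * u i)
          by_cases hi : s * (u i : ℝ) < 0
          · have := hmin i (by simp [hi])
            rw [le_div_iff₀ (by linarith)] at this
            linarith
          · push Not at hi
            have := hy.1 i
            positivity
        · have : ∀ i, (y i + t * (s * u i)) * (A i j : ℝ) = y i * A i j + t * s * (u i * A i j) :=
            fun i => by ring
          simp only [this, Finset.sum_add_distrib, ← Finset.mul_sum, huA', hy.2]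
          ring
      have hz : y i0 + t * (s * u i0) = 0 := by
        have h1 : -(s * (u i0 : ℝ)) ≠ 0 := by linarith
        have h2 : t * (-(s * (u i0 : ℝ))) = y i0 := div_mul_cancel₀ _ h1
        linarith
      have hi0S : i0 ∈ S := by
        by_contra hc
        simp [huS i0 hc] at hi0
      have hcard : (Finset.univ.filter fun i => y i + t * (s * (u i : ℝ)) ≠ 0).card < S.card := by
        apply Finset.card_lt_card
        refine ⟨fun i hi => ?_, fun hsub => ?_⟩
        · by_contra hc
          have h1 : y i = 0 := by simpa [hS] using hc
          simp [h1, huS i hc] at hi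
        · have := hsub hi0S
          simp [hz] at this
      obtain ⟨T, hT1, hT2⟩ := ih _ (lt_of_lt_of_le hcard hN) _ le_rfl hD
      refine ⟨T, hT1, hT2.trans ?_⟩
      have : ∀ i, (y i + t * (s * (u i : ℝ))) * b i = y i * b i + t * (s * u i * b i) :=
        fun i => by ring
      simp only [this, Finset.sum_add_distrib, ← Finset.mul_sum]
      have := mul_nonpos_of_nonneg_of_nonpos ht0 hs1
      linarith
  exact fun y hy => main _ y le_rfl hy

/-- Infeasibility of `A x ≤ b, c x ≥ v` gives a dual solution of value `< v`. -/
theorem dual_of_infeasible {m n : ℕ} {A : Matrix (Fin m) (Fin n) ℚ} {b : Fin m → ℝ}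
    (hne : (Pb A b).Nonempty) (c : Fin n → ℝ) (v : ℝ) (h : ∀ x ∈ Pb A b, ∑ j, c j * x j < v) :
    ∃ y, DualFeas A c y ∧ ∑ i, y i * b i < v := by
  obtain ⟨y, hy0, hyA, hyb⟩ := farkas_aux n (Option (Fin m))
    (fun o j => o.elim (-c j) (fun i => (A i j : ℝ))) (fun o => o.elim (-v) b) (by
      intro x
      by_cases hx : x ∈ Pb A b
      · refine ⟨none, ?_⟩
        have := h x hx
        simpa using this
      · simp only [Pb, Set.mem_ofPred_eq, not_forall, not_le] at hx
        obtain ⟨i, hi⟩ := hx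
        exact ⟨some i, hi⟩)
  simp only [Fintype.sum_option, Option.elim_none, Option.elim_some] at hyA hyb
  obtain ⟨x, hx⟩ := hne
  have hs : 0 < y none := by
    rcases (hy0 none).lt_or_eq with h0 | h0
    · exact h0
    · exfalso
      have hD : DualFeas A 0 (fun i => y (some i)) := ⟨fun i => hy0 _, fun j => by
        have := hyA j
        rw [← h0] at this
        simpa using this⟩
      have := weak_duality hD hx
      rw [← h0] at hyb
      simp at this hyb
      linarith
  refine ⟨fun i => y (some i) / y none, ⟨fun i => div_nonneg (hy0 _) hs.le, fun j => ?_⟩, ?_⟩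
  · have := hyA j
    simp only [div_mul_eq_mul_div, ← Finset.sum_div]
    rw [div_eq_iff hs.ne']
    linarith
  · simp only [div_mul_eq_mul_div, ← Finset.sum_div]
    rw [div_lt_iff₀ hs]
    linarith

/-- Strong duality with basic dual solutions. -/
theorem strong_duality {m n : ℕ} (A : Matrix (Fin m) (Fin n) ℚ) :
    ∃ R : Finset (Fin m) → Matrix (Fin n) (Fin m) ℚ, ∀ b : Fin m → ℝ, (Pb A b).Nonempty →
      ∀ (c : Fin n → ℝ) (M : ℝ), (∀ x ∈ Pb A b, ∑ j, c j * x j ≤ M) →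
      ∃ S, DualFeas A c (fun k => ∑ j, c j * (R S j k : ℝ)) ∧
        ∃ x ∈ Pb A b, ∑ j, c j * x j = ∑ k, (∑ j, c j * (R S j k : ℝ)) * b k := by
  classical
  obtain ⟨R, hR⟩ := exists_basic A
  refine ⟨R, fun b hne c M hM => ?_⟩
  obtain ⟨y, hy, -⟩ := dual_of_infeasible hne c (M + 1) (fun x hx => by linarith [hM x hx])
  obtain ⟨S0, hS0, -⟩ := hR b hne c y hy
  obtain ⟨S, hS, hmin⟩ := Finset.exists_min_image
    (Finset.univ.filter fun S => DualFeas A c (fun k => ∑ j, c j * (R S j k : ℝ)))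
    (fun S => ∑ k, (∑ j, c j * (R S j k : ℝ)) * b k) ⟨S0, by simpa using hS0⟩
  have hS : DualFeas A c (fun k => ∑ j, c j * (R S j k : ℝ)) := by simpa using hS
  refine ⟨S, hS, ?_⟩
  by_contra hcon
  push Not at hcon
  obtain ⟨y', hy', hlt⟩ := dual_of_infeasible hne c
    (∑ k, (∑ j, c j * (R S j k : ℝ)) * b k)
    (fun x hx => lt_of_le_of_ne (weak_duality hS hx) (hcon x hx))
  obtain ⟨T, hT, hle⟩ := hR b hne c y' hy'
  have := hmin T (by simpa using hT)
  linarith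


theorem widthAlong_eq {n : ℕ} {K : Set (Fin n → ℝ)} {c x1 x2 : Fin n → ℝ} (h1 : x1 ∈ K)
    (h2 : x2 ∈ K) (hmax : ∀ x ∈ K, ∑ j, c j * x j ≤ ∑ j, c j * x1 j)
    (hmin : ∀ x ∈ K, ∑ j, c j * x2 j ≤ ∑ j, c j * x j) :
    widthAlong K c = ((∑ j, c j * x1 j - ∑ j, c j * x2 j : ℝ) : EReal) := by
  have e1 : sSup ((fun x => ((∑ i, c i * x i : ℝ) : EReal)) '' K)
      = ((∑ j, c j * x1 j : ℝ) : EReal) := by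
    apply IsGreatest.csSup_eq
    refine ⟨⟨x1, h1, rfl⟩, ?_⟩
    rintro _ ⟨x, hx, rfl⟩
    exact EReal.coe_le_coe_iff.2 (hmax x hx)
  have e2 : sInf ((fun x => ((∑ i, c i * x i : ℝ) : EReal)) '' K)
      = ((∑ j, c j * x2 j : ℝ) : EReal) := by
    apply IsLeast.csInf_eq
    refine ⟨⟨x2, h2, rfl⟩, ?_⟩
    rintro _ ⟨x, hx, rfl⟩
    exact EReal.coe_le_coe_iff.2 (hmin x hx)
  rw [widthAlong, e1, e2, EReal.coe_sub]

theorem bounded_of_widthAlong {n : ℕ} {K : Set (Fin n → ℝ)} {c : Fin n → ℝ}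
    (hne : K.Nonempty) (h : widthAlong K c ≠ ⊤) :
    (∃ M, ∀ x ∈ K, ∑ j, c j * x j ≤ M) ∧ (∃ M, ∀ x ∈ K, M ≤ ∑ j, c j * x j) := by
  obtain ⟨x0, hx0⟩ := hne
  unfold widthAlong at h
  set s := sSup ((fun x => ((∑ i, c i * x i : ℝ) : EReal)) '' K) with hs
  set t := sInf ((fun x => ((∑ i, c i * x i : ℝ) : EReal)) '' K) with ht
  have hs1 : ∀ x ∈ K, ((∑ i, c i * x i : ℝ) : EReal) ≤ s := fun x hx => le_sSup ⟨x, hx, rfl⟩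
  have ht1 : ∀ x ∈ K, t ≤ ((∑ i, c i * x i : ℝ) : EReal) := fun x hx => sInf_le ⟨x, hx, rfl⟩
  clear_value s t
  have hsb : s ≠ ⊥ := fun h0 => by
    have := hs1 x0 hx0; rw [h0] at this; exact absurd this (by simp)
  have htt : t ≠ ⊤ := fun h0 => by
    have := ht1 x0 hx0; rw [h0] at this; exact absurd this (by simp)
  have hst : s ≠ ⊤ := by
    rintro rfl; exact h (EReal.top_sub htt)
  have htb : t ≠ ⊥ := by
    rintro rfl; exact h (by rw [sub_eq_add_neg, EReal.neg_bot, EReal.add_top_of_ne_bot hsb])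
  lift s to ℝ using ⟨hst, hsb⟩
  lift t to ℝ using ⟨htt, htb⟩
  exact ⟨⟨s, fun x hx => EReal.coe_le_coe_iff.1 (hs1 x hx)⟩,
    ⟨t, fun x hx => EReal.coe_le_coe_iff.1 (ht1 x hx)⟩⟩

theorem common_den {ι : Type} [Fintype ι] (f : ι → ℚ) :
    ∃ D : ℕ, 0 < D ∧ ∀ i, ∃ z : ℤ, (D : ℚ) * f i = z := by
  classical
  refine ⟨∏ i, (f i).den, Finset.prod_pos fun i _ => (f i).den_pos, fun i => ?_⟩
  obtain ⟨k, hk⟩ := Finset.dvd_prod_of_mem (fun i => (f i).den) (Finset.mem_univ i)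
  refine ⟨k * (f i).num, ?_⟩
  rw [hk]
  push_cast
  have := Rat.mul_den_eq_num (f i)
  rw [← this]; ring

theorem ratPO_of_fintype {d : ℕ} {ι : Type} [Fintype ι] (a : ι → Fin d → ℚ) (β : ι → ℚ)
    (strict : ι → Bool) :
    IsRatPOPolyhedron {x : Fin d → ℝ | ∀ i, if strict i then (∑ j, (a i j : ℝ) * x j) < (β i : ℝ)
                  else (∑ j, (a i j : ℝ) * x j) ≤ (β i : ℝ)} := by
  let e := Fintype.equivFin ι
  refine ⟨Fintype.card ι, fun k => a (e.symm k), fun k => β (e.symm k),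
    fun k => strict (e.symm k), ?_⟩
  ext x
  constructor
  · intro hx k
    exact hx (e.symm k)
  · intro hx i
    have := hx (e i)
    simpa using this

/-- Candidate pairs of (scaled, integral) dual solutions, for the direction `c`. -/
def CandFor {m n : ℕ} (A : Matrix (Fin m) (Fin n) ℚ) (D : ℕ) (c : Fin n → ℤ)
    (p : (Fin m → ℕ) × (Fin m → ℕ)) : Prop :=
  c ≠ 0 ∧ DualFeas A (fun j => (c j : ℝ)) (fun i => (p.1 i : ℝ) / D) ∧
    DualFeas A (fun j => -(c j : ℝ)) (fun i => (p.2 i : ℝ) / D)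

def Cand {m n : ℕ} (A : Matrix (Fin m) (Fin n) ℚ) (D : ℕ)
    (p : (Fin m → ℕ) × (Fin m → ℕ)) : Prop := ∃ c : Fin n → ℤ, CandFor A D c p

noncomputable def ell {m : ℕ} (D : ℕ) (p : (Fin m → ℕ) × (Fin m → ℕ)) (b : Fin m → ℝ) : ℝ :=
  ∑ i, (p.1 i : ℝ) / D * b i + ∑ i, (p.2 i : ℝ) / D * b i

theorem ell_mono {m n : ℕ} {A : Matrix (Fin m) (Fin n) ℚ} {D : ℕ} {b : Fin m → ℝ}
    (hne : (Pb A b).Nonempty) {p p' : (Fin m → ℕ) × (Fin m → ℕ)} (h : p' ≤ p)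
    (hp : Cand A D p) (hp' : Cand A D p') : ell D p' b ≤ ell D p b := by
  obtain ⟨x, hx⟩ := hne
  obtain ⟨c, -, h1, h2⟩ := hp
  obtain ⟨c', -, h1', h2'⟩ := hp'
  have hD : DualFeas A 0 (fun i => ((p.1 i : ℝ) / D - (p'.1 i : ℝ) / D)
      + ((p.2 i : ℝ) / D - (p'.2 i : ℝ) / D)) := by
    refine ⟨fun i => ?_, fun j => ?_⟩
    · have e1 : (p'.1 i : ℝ) ≤ p.1 i := by exact_mod_cast h.1 i
      have e2 : (p'.2 i : ℝ) ≤ p.2 i := by exact_mod_cast h.2 i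
      have hDn : (0 : ℝ) ≤ D := Nat.cast_nonneg D
      have := div_le_div_of_nonneg_right e1 hDn
      have := div_le_div_of_nonneg_right e2 hDn
      show 0 ≤ _
      linarith
    · simp only [add_mul, sub_mul, Finset.sum_add_distrib, Finset.sum_sub_distrib]
      rw [h1.2, h2.2, h1'.2, h2'.2]
      simp
  have := weak_duality hD hx
  simp only [Pi.zero_apply, zero_mul, Finset.sum_const_zero, add_mul, sub_mul,
    Finset.sum_add_distrib, Finset.sum_sub_distrib] at this
  unfold ell
  linarith

/-- Everything about widths we need. -/
theorem width_cands {m n : ℕ} (A : Matrix (Fin m) (Fin n) ℚ) :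
    ∃ D : ℕ, 0 < D ∧ ∀ b : Fin m → ℝ, (Pb A b).Nonempty → ∀ c : Fin n → ℤ, c ≠ 0 →
      widthAlong (Pb A b) (fun j => (c j : ℝ)) ≠ ⊤ →
      ∃ p, CandFor A D c p ∧ widthAlong (Pb A b) (fun j => (c j : ℝ)) = (ell D p b : EReal) ∧
        (∃ x ∈ Pb A b, ∑ j, (c j : ℝ) * x j = ∑ i, (p.1 i : ℝ) / D * b i) ∧
        (∃ x ∈ Pb A b, ∑ j, (c j : ℝ) * x j = - ∑ i, (p.2 i : ℝ) / D * b i) := by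
  obtain ⟨R, hR⟩ := strong_duality A
  obtain ⟨D, hD, hintg⟩ := common_den
    (fun q : Finset (Fin m) × Fin n × Fin m => R q.1 q.2.1 q.2.2)
  have hDR : (0 : ℝ) < D := by exact_mod_cast hD
  have nat : ∀ (c : Fin n → ℤ) S, DualFeas A (fun j => (c j : ℝ))
      (fun k => ∑ j, (c j : ℝ) * (R S j k : ℝ)) →
      ∃ y : Fin m → ℕ, ∀ k, (y k : ℝ) / D = ∑ j, (c j : ℝ) * (R S j k : ℝ) := by
    intro c S hF
    choose z hz using hintg
    have : ∀ k, ∃ y : ℕ, (y : ℝ) / D = ∑ j, (c j : ℝ) * (R S j k : ℝ) := by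
      intro k
      have e : ((∑ j, c j * z (S, j, k) : ℤ) : ℝ) = D * ∑ j, (c j : ℝ) * (R S j k : ℝ) := by
        push_cast
        rw [Finset.mul_sum]
        refine Finset.sum_congr rfl fun j _ => ?_
        have h1 : (D : ℝ) * (R S j k : ℝ) = (z (S, j, k) : ℝ) := by
          have := congrArg (fun q : ℚ => (q : ℝ)) (hz (S, j, k))
          push_cast at this
          exact this
        rw [← h1]; ring
      have hnn : 0 ≤ ∑ j, c j * z (S, j, k) := by
        have h0 : (0 : ℝ) ≤ ((∑ j, c j * z (S, j, k) : ℤ) : ℝ) := by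
          rw [e]; exact mul_nonneg hDR.le (hF.1 k)
        exact_mod_cast h0
      refine ⟨(∑ j, c j * z (S, j, k)).toNat, ?_⟩
      have h2 : (((∑ j, c j * z (S, j, k)).toNat : ℕ) : ℝ)
          = ((∑ j, c j * z (S, j, k) : ℤ) : ℝ) := by
        exact_mod_cast congrArg (fun q : ℤ => (q : ℝ)) (Int.toNat_of_nonneg hnn)
      rw [h2, e]
      field_simp
    exact ⟨fun k => (this k).choose, fun k => (this k).choose_spec⟩
  refine ⟨D, hD, fun b hne c hc hw => ?_⟩
  obtain ⟨⟨M, hM⟩, ⟨M', hM'⟩⟩ := bounded_of_widthAlong hne hw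
  obtain ⟨S, hS, x1, hx1, hS1⟩ := hR b hne (fun j => (c j : ℝ)) M hM
  obtain ⟨T, hT, x2, hx2, hT1⟩ := hR b hne (fun j => ((-c) j : ℤ)) (-M') (by
    intro x hx
    have := hM' x hx
    simp only [Pi.neg_apply, Int.cast_neg, neg_mul, Finset.sum_neg_distrib]
    linarith)
  obtain ⟨y, hy⟩ := nat c S hS
  obtain ⟨z, hz⟩ := nat (-c) T hT
  simp only [← hy] at hS hS1
  simp only [← hz] at hT hT1
  simp only [Pi.neg_apply, Int.cast_neg, neg_mul, Finset.sum_neg_distrib] at hT hT1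
  refine ⟨(y, z), ⟨hc, hS, hT⟩, ?_, ⟨x1, hx1, hS1⟩, ⟨x2, hx2, by linarith⟩⟩
  rw [widthAlong_eq hx1 hx2]
  · congr 1
    unfold ell
    simp only
    linarith
  · intro x hx
    rw [hS1]; exact weak_duality hS hx
  · intro x hx
    have := weak_duality hT hx
    simp only [neg_mul, Finset.sum_neg_distrib] at this
    linarith

theorem widthAlong_ne_top {m n : ℕ} {A : Matrix (Fin m) (Fin n) ℚ} {D : ℕ} {c : Fin n → ℤ}
    {p : (Fin m → ℕ) × (Fin m → ℕ)} (hp : CandFor A D c p) {b : Fin m → ℝ} :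
    widthAlong (Pb A b) (fun j => (c j : ℝ)) ≠ ⊤ := by
  obtain ⟨-, h1, h2⟩ := hp
  have hs : sSup ((fun x : Fin n → ℝ => ((∑ i, (c i : ℝ) * x i : ℝ) : EReal)) '' Pb A b)
      ≤ ((∑ i, (p.1 i : ℝ) / D * b i : ℝ) : EReal) := by
    apply sSup_le
    rintro _ ⟨x, hx, rfl⟩
    exact EReal.coe_le_coe_iff.2 (weak_duality h1 hx)
  have ht : ((- ∑ i, (p.2 i : ℝ) / D * b i : ℝ) : EReal) ≤
      sInf ((fun x : Fin n → ℝ => ((∑ i, (c i : ℝ) * x i : ℝ) : EReal)) '' Pb A b) := by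
    apply le_sInf
    rintro _ ⟨x, hx, rfl⟩
    have := weak_duality h2 hx
    simp only [neg_mul, Finset.sum_neg_distrib] at this
    exact EReal.coe_le_coe_iff.2 (by linarith)
  have := EReal.sub_le_sub hs ht
  intro h
  unfold widthAlong at h
  rw [h, ← EReal.coe_sub] at this
  exact EReal.coe_ne_top _ (top_le_iff.1 this)

theorem exists_rat_matrix {m n : ℕ} (c : Fin n → ℤ) (hc : c ≠ 0) (y : Fin m → ℚ) :
    ∃ F : Matrix (Fin n) (Fin m) ℚ, ∀ b : Fin m → ℝ,
      ∑ q, (c q : ℝ) * applyRat F b q = ∑ i, (y i : ℝ) * b i := by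
  refine ⟨Matrix.of fun q i => c q * y i / (∑ r, (c r : ℚ) * c r), fun b => ?_⟩
  have hpos : (0 : ℝ) < ∑ r, (c r : ℝ) * c r := by
    obtain ⟨r, hr⟩ := Function.ne_iff.1 hc
    refine Finset.sum_pos' (fun i _ => mul_self_nonneg _) ⟨r, Finset.mem_univ _, ?_⟩
    have : (c r : ℝ) ≠ 0 := by exact_mod_cast hr
    exact mul_self_pos.2 this
  have e : ∀ q, applyRat (Matrix.of fun q i => c q * y i / (∑ r, (c r : ℚ) * c r)) b q
      = (c q : ℝ) * ((∑ i, (y i : ℝ) * b i) / ∑ r, (c r : ℝ) * c r) := by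
    intro q
    simp only [applyRat, Matrix.mulVec, dotProduct, Matrix.map_apply, Matrix.of_apply]
    push_cast
    rw [Finset.sum_div, Finset.mul_sum]
    exact Finset.sum_congr rfl fun i _ => by ring
  simp only [e, ← mul_assoc, ← Finset.sum_mul]
  have hne0 := hpos.ne'
  exact mul_div_cancel₀ _ hne0

/-- Theorem 3.  Let `A` define a parametric polyhedron of finite
lattice width and let `Q` be a rational partially open polyhedron of right-hand sides
with `P_b ≠ ∅` for all `b ∈ Q`.  Then `Q` can be partitioned into rational partially
open polyhedra `Q₁, …, Q_t` with associated triples `(Fᵢ, Gᵢ, cᵢ)` such that for every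
`b ∈ Qᵢ`: `min {cᵢ·x : x ∈ P_b} = cᵢ Gᵢ b`, `max {cᵢ·x : x ∈ P_b} = cᵢ Fᵢ b` and
`w(P_b) = w_{cᵢ}(P_b) = cᵢ (Fᵢ - Gᵢ) b`. -/
theorem width_direction_partition {m n : ℕ}
    (A : Matrix (Fin m) (Fin n) ℚ) (hrank : A.rank = n)
    (hfin : ∀ b : Fin m → ℝ, (Pb A b).Nonempty → latticeWidth (Pb A b) ≠ ⊤)
    (Q : Set (Fin m → ℝ)) (hQ : IsRatPOPolyhedron Q)
    (hQne : ∀ b ∈ Q, (Pb A b).Nonempty) :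
    ∃ (t : ℕ) (Qp : Fin t → Set (Fin m → ℝ))
      (F G : Fin t → Matrix (Fin n) (Fin m) ℚ) (c : Fin t → Fin n → ℤ),
      (∀ i, IsRatPOPolyhedron (Qp i)) ∧
      (⋃ i, Qp i) = Q ∧
      (∀ i j, i ≠ j → Disjoint (Qp i) (Qp j)) ∧
      (∀ i, c i ≠ 0) ∧
      ∀ i, ∀ b ∈ Qp i,
        IsLeast {r : ℝ | ∃ x ∈ Pb A b, r = ∑ q, (c i q : ℝ) * x q}
          (∑ q, (c i q : ℝ) * applyRat (G i) b q) ∧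
        IsGreatest {r : ℝ | ∃ x ∈ Pb A b, r = ∑ q, (c i q : ℝ) * x q}
          (∑ q, (c i q : ℝ) * applyRat (F i) b q) ∧
        latticeWidth (Pb A b) = widthAlong (Pb A b) (fun q => (c i q : ℝ)) ∧
        latticeWidth (Pb A b) =
          ((∑ q, (c i q : ℝ) * (applyRat (F i) b q - applyRat (G i) b q) : ℝ) : EReal) := by
  classical
  obtain ⟨D, hD, hW⟩ := width_cands A
  have hfinite : {p : (Fin m → ℕ) × (Fin m → ℕ) | Minimal (Cand A D) p}.Finite :=
    WellQuasiOrderedLE.finite_of_isAntichain (setOfPred_minimal_antichain _)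
  obtain ⟨t, P, -, hP⟩ : ∃ (t : ℕ) (P : Fin t → (Fin m → ℕ) × (Fin m → ℕ)),
      Function.Injective P ∧ ∀ p, Minimal (Cand A D) p ↔ ∃ k, P k = p := by
    obtain ⟨t, P, hPi, hPr⟩ := hfinite.fin_param
    refine ⟨t, P, hPi, fun p => ?_⟩
    have : p ∈ Set.range P ↔ Minimal (Cand A D) p := by rw [hPr]; rfl
    exact this.symm
  have hPc : ∀ k, ∃ c : Fin n → ℤ, CandFor A D c (P k) := fun k => ((hP _).2 ⟨k, rfl⟩).1
  choose c hc using hPc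
  choose F hF using fun k => exists_rat_matrix (c k) (hc k).1 (fun i => ((P k).1 i : ℚ) / D)
  choose G hG using fun k => exists_rat_matrix (c k) (hc k).1 (fun i => -(((P k).2 i : ℚ) / D))
  have hF' : ∀ k b, ∑ q, (c k q : ℝ) * applyRat (F k) b q = ∑ i, ((P k).1 i : ℝ) / D * b i := by
    intro k b; rw [hF]; push_cast; rfl
  have hG' : ∀ k b, ∑ q, (c k q : ℝ) * applyRat (G k) b q
      = - ∑ i, ((P k).2 i : ℝ) / D * b i := by
    intro k b; rw [hG]; push_cast; simp
  -- every direction of finite width is dominated by a candidate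
  have hdom : ∀ b, (Pb A b).Nonempty → ∀ d : Fin n → ℤ, d ≠ 0 →
      widthAlong (Pb A b) (fun j => (d j : ℝ)) ≠ ⊤ →
      ∃ k, (ell D (P k) b : EReal) ≤ widthAlong (Pb A b) (fun j => (d j : ℝ)) := by
    intro b hne d hd hw
    obtain ⟨p, hp, hpw, -⟩ := hW b hne d hd hw
    obtain ⟨p', hle, hmin⟩ := exists_minimal_le_of_wellFoundedLT (Cand A D) p ⟨d, hp⟩
    obtain ⟨k, rfl⟩ := (hP p').1 hmin
    refine ⟨k, ?_⟩
    rw [hpw]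
    exact EReal.coe_le_coe_iff.2 (ell_mono hne hle ⟨d, hp⟩ hmin.1)
  let Cell : Fin t → Set (Fin m → ℝ) := fun k =>
    {b | ∀ j, if j < k then ell D (P k) b < ell D (P j) b else ell D (P k) b ≤ ell D (P j) b}
  have hCell : ∀ k b, b ∈ Cell k → ∀ j, ell D (P k) b ≤ ell D (P j) b := by
    intro k b hb j
    have := hb j
    split_ifs at this
    · exact this.le
    · exact this
  refine ⟨t, fun k => Q ∩ Cell k, F, G, c, ?_, ?_, ?_, fun k => (hc k).1, ?_⟩
  · intro k
    obtain ⟨s, a, β, strict, rfl⟩ := hQ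
    have := ratPO_of_fintype (d := m) (ι := Fin s ⊕ Fin t)
      (Sum.elim a (fun j i => (((P k).1 i : ℚ) / D + ((P k).2 i : ℚ) / D)
        - (((P j).1 i : ℚ) / D + ((P j).2 i : ℚ) / D)))
      (Sum.elim β (fun _ => 0)) (Sum.elim strict (fun j => decide (j < k)))
    convert this using 1
    have key : ∀ (j : Fin t) (b : Fin m → ℝ), ∑ i, (((((P k).1 i : ℚ) / D + ((P k).2 i : ℚ) / D)
        - (((P j).1 i : ℚ) / D + ((P j).2 i : ℚ) / D) : ℚ) : ℝ) * b i
        = ell D (P k) b - ell D (P j) b := by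
      intro j b
      unfold ell
      push_cast
      simp only [sub_mul, add_mul, Finset.sum_sub_distrib, Finset.sum_add_distrib]
    ext b
    simp only [Set.mem_inter_iff, Set.mem_ofPred_eq, Sum.forall, Sum.elim_inl, Sum.elim_inr, Cell,
      key, decide_eq_true_eq, Rat.cast_zero, sub_neg, sub_nonpos]
    refine and_congr Iff.rfl (forall_congr' fun j => ?_)
    by_cases hjk : j < k
    · simp only [if_pos hjk]
    · simp only [if_neg hjk]
  · ext b
    simp only [Set.mem_iUnion, Set.mem_inter_iff]
    constructor
    · rintro ⟨k, h, -⟩; exact h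
    · intro hb
      have hne := hQne b hb
      obtain ⟨d, hd, hdw⟩ : ∃ d : Fin n → ℤ, d ≠ 0 ∧
          widthAlong (Pb A b) (fun j => (d j : ℝ)) ≠ ⊤ := by
        by_contra hcon
        push Not at hcon
        apply hfin b hne
        unfold latticeWidth
        rw [sInf_eq_top]
        rintro _ ⟨d, hd, rfl⟩
        exact hcon d hd
      obtain ⟨k0, -⟩ := hdom b hne d hd hdw
      obtain ⟨k1, -, hk1⟩ := Finset.exists_min_image Finset.univ (fun k => ell D (P k) b)
        ⟨k0, Finset.mem_univ _⟩
      obtain ⟨k, hk, hkmin⟩ := Finset.exists_min_image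
        (Finset.univ.filter fun k => ∀ j, ell D (P k) b ≤ ell D (P j) b) id
        ⟨k1, by simpa using hk1⟩
      have hk : ∀ j, ell D (P k) b ≤ ell D (P j) b := by simpa using hk
      refine ⟨k, hb, fun j => ?_⟩
      split_ifs with hjk
      · by_contra hcon
        push Not at hcon
        have : k ≤ j := hkmin j (by simpa using fun i => hcon.trans (hk i))
        exact absurd hjk (not_lt.2 this)
      · exact hk j
  · have hlt : ∀ i j, i < j → Disjoint (Q ∩ Cell i) (Q ∩ Cell j) := by
      intro i j hij
      rw [Set.disjoint_left]
      rintro b ⟨-, h1⟩ ⟨-, h2⟩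
      have h3 := hCell i b h1 j
      have h4 := h2 i
      rw [if_pos hij] at h4
      linarith
    intro i j hij
    rcases lt_or_gt_of_ne hij with h | h
    · exact hlt i j h
    · exact (hlt j i h).symm
  · rintro k b ⟨hbQ, hbC⟩
    have hne := hQne b hbQ
    have hmin := hCell k b hbC
    have h1 := (hc k).2.1
    have h2 := (hc k).2.2
    obtain ⟨p, hp, hpw, ⟨x1, hx1, hx1e⟩, ⟨x2, hx2, hx2e⟩⟩ :=
      hW b hne (c k) (hc k).1 (widthAlong_ne_top (hc k))
    have hlow : (ell D (P k) b : EReal) ≤ latticeWidth (Pb A b) := by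
      apply le_sInf
      rintro _ ⟨d, hd, rfl⟩
      by_cases hdw : widthAlong (Pb A b) (fun j => (d j : ℝ)) = ⊤
      · rw [hdw]; exact le_top
      · obtain ⟨j, hj⟩ := hdom b hne d hd hdw
        exact le_trans (EReal.coe_le_coe_iff.2 (hmin j)) hj
    have hup : latticeWidth (Pb A b) ≤ widthAlong (Pb A b) (fun q => (c k q : ℝ)) :=
      sInf_le ⟨c k, (hc k).1, rfl⟩
    have w1 := weak_duality h1 hx1
    have w2 := weak_duality h2 hx2
    simp only [neg_mul, Finset.sum_neg_distrib] at w2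
    have hle : ell D (P k) b ≤ ell D p b := by
      have := hlow.trans hup
      rw [hpw] at this
      exact EReal.coe_le_coe_iff.1 this
    have hle' := hle
    unfold ell at hle'
    have e1 : ∑ j, (c k j : ℝ) * x1 j = ∑ i, ((P k).1 i : ℝ) / D * b i := by linarith
    have e2 : ∑ j, (c k j : ℝ) * x2 j = - ∑ i, ((P k).2 i : ℝ) / D * b i := by linarith
    have e3 : ell D p b = ell D (P k) b := by unfold ell; linarith
    rw [e3] at hpw
    refine ⟨⟨⟨x2, hx2, ?_⟩, ?_⟩, ⟨⟨x1, hx1, ?_⟩, ?_⟩, ?_, ?_⟩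
    · rw [hG', e2]
    · rintro _ ⟨x, hx, rfl⟩
      rw [hG']
      have := weak_duality h2 hx
      simp only [neg_mul, Finset.sum_neg_distrib] at this
      linarith
    · rw [hF', e1]
    · rintro _ ⟨x, hx, rfl⟩
      rw [hF']
      exact weak_duality h1 hx
    · exact le_antisymm hup (by rw [hpw]; exact hlow)
    · have : ∑ q, (c k q : ℝ) * (applyRat (F k) b q - applyRat (G k) b q) = ell D (P k) b := by
        simp only [mul_sub, Finset.sum_sub_distrib]
        rw [hF', hG']; unfold ell; ring
      rw [this]
      exact le_antisymm (by rw [← hpw]; exact hup) hlow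
end

section
/- Let A ∈ ℚ^{m×n} be a matrix of full column rank defining a parametric polyhedron P of finite lattice width, and let Q ⊆ ℝ^m be a rational partially open polyhedron such that P_b is nonempty for all b ∈ Q. Then there exist a finite partition of Q into sets S₁, …, S_t, natural numbers l₁, …, l_t, rational partially open polyhedra S'_i ⊆ ℝ^{m + l_i} with S_i = S'_i / ℤ^{l_i}, and for each i finitely many unimodular matrices U_{ij} ∈ ℤ^{n×n} and rational affine maps T_{ij} : ℝ^m → ℝⁿ (j = 1, …, k_i), such that for every b ∈ S_i: P_b ∩ ℤⁿ ≠ ∅ if and only if U_{ij} ⌈T_{ij} b⌉ ∈ P_b for some index j, where ⌈·⌉ denotes componentwise rounding up. -/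
open Matrix Set

noncomputable def rowL {m n : ℕ} (A : Matrix (Fin m) (Fin n) ℚ) (i : Fin m) :
    (Fin n → ℝ) →ₗ[ℝ] ℝ := ∑ j, (A i j : ℝ) • LinearMap.proj j

lemma rowL_apply {m n : ℕ} (A : Matrix (Fin m) (Fin n) ℚ) (i : Fin m) (x : Fin n → ℝ) :
    rowL A i x = ∑ j, (A i j : ℝ) * x j := by
  simp [rowL, LinearMap.sum_apply]

lemma mem_Pb {m n : ℕ} (A : Matrix (Fin m) (Fin n) ℚ) (b : Fin m → ℝ) (x : Fin n → ℝ) :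
    x ∈ Pb A b ↔ ∀ i, rowL A i x ≤ b i := by
  simp [Pb, rowL_apply]

/-- Injective rational matrices have rational left inverses. -/
lemma exists_left_inv {m n : ℕ} (A : Matrix (Fin m) (Fin n) ℚ)
    (h : ∀ u : Fin n → ℚ, A.mulVec u = 0 → u = 0) :
    ∃ L : Matrix (Fin n) (Fin m) ℚ, L * A = 1 := by
  have hk : LinearMap.ker (Matrix.toLin' A) = ⊥ := by
    rw [LinearMap.ker_eq_bot']
    intro u hu
    exact h u (by simpa using hu)
  obtain ⟨g, hg⟩ := LinearMap.exists_leftInverse_of_injective _ hk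
  refine ⟨LinearMap.toMatrix' g, ?_⟩
  have := congrArg LinearMap.toMatrix' hg
  rwa [LinearMap.toMatrix'_comp, LinearMap.toMatrix'_toLin', LinearMap.toMatrix'_id] at this

lemma left_inv_apply {m n : ℕ} (A : Matrix (Fin m) (Fin n) ℚ) (L : Matrix (Fin n) (Fin m) ℚ)
    (h : L * A = 1) (x : Fin n → ℝ) (r : Fin n) :
    ∑ i, (L r i : ℝ) * rowL A i x = x r := by
  have h2 : ∀ j, ∑ i, (L r i : ℝ) * (A i j : ℝ) = if r = j then 1 else 0 := by
    intro j
    have := congrFun (congrFun h r) j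
    rw [Matrix.mul_apply, Matrix.one_apply] at this
    have h3 := congrArg (fun q : ℚ => (q : ℝ)) this
    push_cast at h3
    rw [h3]
    split_ifs <;> simp
  simp_rw [rowL_apply, Finset.mul_sum]
  rw [Finset.sum_comm]
  simp_rw [← mul_assoc, ← Finset.sum_mul, h2]
  simp

lemma rank_inj {m n : ℕ} (A : Matrix (Fin m) (Fin n) ℚ) (hrank : A.rank = n)
    (u : Fin n → ℚ) (hu : A.mulVec u = 0) : u = 0 := by
  have h1 := LinearMap.finrank_range_add_finrank_ker A.mulVecLin
  have h2 : Module.finrank ℚ (LinearMap.range A.mulVecLin) = n := hrank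
  rw [h2] at h1
  have h3 : Module.finrank ℚ (LinearMap.ker A.mulVecLin) = 0 := by
    simp at h1
    simpa using h1
  have h4 := Submodule.finrank_eq_zero.1 h3
  exact (LinearMap.ker_eq_bot'.1 h4) u (by simpa using hu)

lemma real_inj {m n : ℕ} (A : Matrix (Fin m) (Fin n) ℚ) (hrank : A.rank = n)
    (u : Fin n → ℝ) (hu : ∀ i, rowL A i u = 0) : u = 0 := by
  obtain ⟨L, hL⟩ := exists_left_inv A (rank_inj A hrank)
  funext r
  rw [← left_inv_apply A L hL u r]
  simp [hu]

/-- Every realizable sign pattern is realized by an integer vector. -/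
lemma exists_int_sign {m n : ℕ} (A : Matrix (Fin m) (Fin n) ℚ) (u : Fin n → ℝ) :
    ∃ g : Fin n → ℤ, ∀ i, SignType.sign (rowL A i (fun j => (g j : ℝ))) =
      SignType.sign (rowL A i u) := by
  classical
  let V := Submodule.span ℚ (Set.range u)
  haveI : FiniteDimensional ℚ V := FiniteDimensional.span_of_finite ℚ (Set.finite_range u)
  let e := Module.finBasis ℚ V
  have hmem : ∀ j, u j ∈ V := fun j => Submodule.subset_span ⟨j, rfl⟩
  let q : Fin n → Fin (Module.finrank ℚ V) → ℚ := fun j k => e.repr ⟨u j, hmem j⟩ k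
  have hq : ∀ j, u j = ∑ k, (q j k : ℝ) * (e k : ℝ) := by
    intro j
    have := congrArg (fun v : V => (v : ℝ)) (e.sum_repr ⟨u j, hmem j⟩)
    simp only [Submodule.coe_sum, Submodule.coe_smul, Rat.smul_def] at this
    exact this.symm
  let F : (Fin (Module.finrank ℚ V) → ℝ) → Fin n → ℝ := fun y j => ∑ k, (q j k : ℝ) * y k
  have hFu : F (fun k => (e k : ℝ)) = u := by
    funext j; exact (hq j).symm
  have hrow : ∀ i y, rowL A i (F y) = ∑ k, ((∑ j, A i j * q j k : ℚ) : ℝ) * y k := by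
    intro i y
    simp only [rowL_apply, F, Finset.mul_sum]
    rw [Finset.sum_comm]
    push_cast
    simp only [Finset.sum_mul, mul_assoc]
  have hli : LinearIndependent ℚ (fun k => (e k : ℝ)) :=
    e.linearIndependent.map' V.subtype (Submodule.ker_subtype V)
  have hzero : ∀ i, rowL A i u = 0 → ∀ y, rowL A i (F y) = 0 := by
    intro i hi y
    rw [← hFu, hrow] at hi
    rw [Fintype.linearIndependent_iff] at hli
    have := hli (fun k => ∑ j, A i j * q j k) (by simpa [Rat.smul_def] using hi)
    rw [hrow]
    exact Finset.sum_eq_zero fun k _ => by rw [this k]; simp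
  have hcont : ∀ i, Continuous fun y => rowL A i (F y) := by
    intro i
    simp_rw [hrow]
    fun_prop
  let O : Set (Fin (Module.finrank ℚ V) → ℝ) :=
    ⋂ i, {y | (0 < rowL A i u → 0 < rowL A i (F y)) ∧ (rowL A i u < 0 → rowL A i (F y) < 0)}
  have hO : IsOpen O := by
    refine isOpen_iInter_of_finite fun i => ?_
    rcases lt_trichotomy (rowL A i u) 0 with h | h | h
    · simp only [h, not_lt_of_gt h, false_imp_iff, true_imp_iff, true_and]
      exact isOpen_lt (hcont i) continuous_const
    · simp [h]
    · simp only [h, not_lt_of_gt h, false_imp_iff, true_imp_iff, and_true]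
      exact isOpen_lt continuous_const (hcont i)
  have hOne : O.Nonempty := ⟨fun k => (e k : ℝ), by
    simp only [O, Set.mem_iInter, Set.mem_setOf_eq, hFu]
    exact fun i => ⟨id, id⟩⟩
  have hd : DenseRange (Pi.map (fun (_ : Fin (Module.finrank ℚ V)) (x : ℚ) => (x : ℝ))) :=
    DenseRange.piMap fun _ => Rat.denseRange_cast
  obtain ⟨y, hy⟩ := hd.exists_mem_open hO hOne
  simp only [O, Set.mem_iInter, Set.mem_setOf_eq] at hy
  let w : Fin n → ℚ := fun j => ∑ k, q j k * y k
  have hw : F (Pi.map (fun _ (x : ℚ) => (x : ℝ)) y) = fun j => (w j : ℝ) := by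
    funext j
    simp [F, w, Pi.map]
  rw [hw] at hy
  obtain ⟨⟨N, hN⟩, hNw⟩ := IsLocalization.exist_integer_multiples_of_finite
    (Submonoid.pos ℤ) w
  have hN' : (0 : ℤ) < N := hN
  choose g hg using hNw
  refine ⟨g, fun i => ?_⟩
  have hgw : (fun j => (g j : ℝ)) = (N : ℝ) • (fun j => (w j : ℝ)) := by
    funext j
    have := congrArg (fun x : ℚ => (x : ℝ)) (hg j)
    simpa using this
  have hNr : (0 : ℝ) < N := by exact_mod_cast hN'
  rw [hgw, map_smul, smul_eq_mul, sign_mul, sign_pos hNr, one_mul]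
  rcases lt_trichotomy (rowL A i u) 0 with h | h | h
  · rw [sign_neg h, sign_neg ((hy i).2 h)]
  · rw [h, ← hw, hzero i h]
  · rw [sign_pos h, sign_pos ((hy i).1 h)]

def Conf {m n : ℕ} (A : Matrix (Fin m) (Fin n) ℚ) (u h : Fin n → ℝ) : Prop :=
  ∀ i, (0 ≤ rowL A i u → 0 ≤ rowL A i h) ∧ (rowL A i u ≤ 0 → rowL A i h ≤ 0)

lemma Conf.add {m n : ℕ} {A : Matrix (Fin m) (Fin n) ℚ} {u h k : Fin n → ℝ}
    (h1 : Conf A u h) (h2 : Conf A u k) : Conf A u (h + k) := fun i => by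
  rw [map_add]
  exact ⟨fun hh => add_nonneg ((h1 i).1 hh) ((h2 i).1 hh),
    fun hh => add_nonpos ((h1 i).2 hh) ((h2 i).2 hh)⟩

lemma Conf.smul {m n : ℕ} {A : Matrix (Fin m) (Fin n) ℚ} {u h : Fin n → ℝ}
    (h1 : Conf A u h) {t : ℝ} (ht : 0 ≤ t) : Conf A u (t • h) := fun i => by
  rw [map_smul, smul_eq_mul]
  exact ⟨fun hh => mul_nonneg ht ((h1 i).1 hh),
    fun hh => mul_nonpos_of_nonneg_of_nonpos ht ((h1 i).2 hh)⟩

lemma Conf.trans {m n : ℕ} {A : Matrix (Fin m) (Fin n) ℚ} {u h k : Fin n → ℝ}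
    (h1 : Conf A u h) (h2 : Conf A h k) : Conf A u k := fun i =>
  ⟨fun hh => (h2 i).1 ((h1 i).1 hh), fun hh => (h2 i).2 ((h1 i).2 hh)⟩

lemma exists_bound {m n : ℕ} (A : Matrix (Fin m) (Fin n) ℚ) :
    ∃ M : ℝ, 0 ≤ M ∧ ∀ u : Fin n → ℝ, ∃ g : Fin n → ℤ,
      (∀ i, SignType.sign (rowL A i (fun j => (g j : ℝ))) = SignType.sign (rowL A i u)) ∧
      ∀ j, |(g j : ℝ)| ≤ M := by
  classical
  let G : (Fin m → SignType) → Fin n → ℤ := fun σ =>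
    if h : ∃ g : Fin n → ℤ, ∀ i, SignType.sign (rowL A i (fun j => (g j : ℝ))) = σ i
    then h.choose else 0
  refine ⟨∑ σ, ∑ j, |(G σ j : ℝ)|, by positivity, fun u => ?_⟩
  have h : ∃ g : Fin n → ℤ, ∀ i, SignType.sign (rowL A i (fun j => (g j : ℝ))) =
      (fun i => SignType.sign (rowL A i u)) i := exists_int_sign A u
  refine ⟨G (fun i => SignType.sign (rowL A i u)), ?_, fun j => ?_⟩
  · have : G (fun i => SignType.sign (rowL A i u)) = h.choose := dif_pos h
    rw [this]
    exact h.choose_spec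
  · refine le_trans ?_ (Finset.single_le_sum
      (f := fun σ => ∑ j, |(G σ j : ℝ)|) (fun σ _ => by positivity)
      (Finset.mem_univ (fun i => SignType.sign (rowL A i u))))
    exact Finset.single_le_sum
      (f := fun j => |(G (fun i => SignType.sign (rowL A i u)) j : ℝ)|)
      (fun σ _ => abs_nonneg _) (Finset.mem_univ j)

/-- Conformal integer approximation. -/
lemma exists_conf {m n : ℕ} (A : Matrix (Fin m) (Fin n) ℚ) (hrank : A.rank = n) (M : ℝ)
    (hM0 : 0 ≤ M)
    (hM : ∀ u : Fin n → ℝ, ∃ g : Fin n → ℤ,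
      (∀ i, SignType.sign (rowL A i (fun j => (g j : ℝ))) = SignType.sign (rowL A i u)) ∧
      ∀ j, |(g j : ℝ)| ≤ M) (N : ℕ) :
    ∀ u : Fin n → ℝ, (Finset.univ.filter fun i => rowL A i u ≠ 0).card ≤ N →
      ∃ h : Fin n → ℤ, Conf A u (fun j => (h j : ℝ)) ∧ Conf A u (u - fun j => (h j : ℝ)) ∧
        ∀ j, |u j - h j| ≤ N * M := by
  classical
  induction N with
  | zero =>
    intro u hu
    have h0 : u = 0 := by
      apply real_inj A hrank
      intro i
      by_contra hi
      have : i ∈ Finset.univ.filter fun i => rowL A i u ≠ 0 := by simp [hi]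
      rw [Finset.card_eq_zero.1 (Nat.le_zero.1 hu)] at this
      simp at this
    subst h0
    have hz : (fun j : Fin n => (((0 : Fin n → ℤ) j : ℤ) : ℝ)) = 0 := by funext j; simp
    refine ⟨0, ?_, ?_, ?_⟩
    · rw [hz]; intro i; simp
    · rw [hz]; intro i; simp
    · simp
  | succ N ih =>
    intro u hu
    by_cases hne : (Finset.univ.filter fun i => rowL A i u ≠ 0).Nonempty
    swap
    · rw [Finset.not_nonempty_iff_eq_empty] at hne
      obtain ⟨h, h1, h2, h3⟩ := ih u (by rw [hne]; simp)
      refine ⟨h, h1, h2, fun j => (h3 j).trans ?_⟩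
      push_cast
      nlinarith
    obtain ⟨g, hg, hgM⟩ := hM u
    set g' : Fin n → ℝ := fun j => (g j : ℝ) with hg'
    have hgconf : Conf A u g' := by
      intro i
      have := hg i
      constructor
      · intro h
        rw [← sign_nonneg_iff] at h ⊢
        rwa [this]
      · intro h
        rw [← sign_nonpos_iff] at h ⊢
        rwa [this]
    have hgne : ∀ i, rowL A i u ≠ 0 → rowL A i g' ≠ 0 := by
      intro i h h'
      have := hg i
      rw [h', sign_zero] at this
      exact h (sign_eq_zero_iff.1 this.symm)
    have hpos : ∀ i, rowL A i u ≠ 0 → 0 < rowL A i u / rowL A i g' := by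
      intro i hi
      have h1 := hgne i hi
      rcases lt_or_gt_of_ne hi with h | h
      · exact div_pos_of_neg_of_neg h (lt_of_le_of_ne ((hgconf i).2 h.le) h1)
      · exact div_pos h (lt_of_le_of_ne ((hgconf i).1 h.le) h1.symm)
    obtain ⟨i0, hi0, hmin⟩ := Finset.exists_min_image _
      (fun i => rowL A i u / rowL A i g') hne
    simp only [Finset.mem_filter, Finset.mem_univ, true_and] at hi0 hmin
    set t := rowL A i0 u / rowL A i0 g' with ht
    have ht0 : 0 < t := hpos i0 hi0
    have hu'conf : Conf A u (u - t • g') := by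
      intro i
      rw [map_sub, map_smul, smul_eq_mul]
      by_cases hi : rowL A i u = 0
      · have h1 := (hgconf i).1 hi.ge
        have h2 := (hgconf i).2 hi.le
        have h3 : rowL A i g' = 0 := le_antisymm h2 h1
        simp [hi, h3]
      · have h4 := hmin i hi
        rcases lt_or_gt_of_ne hi with h | h
        · have h5 := lt_of_le_of_ne ((hgconf i).2 h.le) (hgne i hi)
          rw [le_div_iff_of_neg h5] at h4
          exact ⟨fun h6 => absurd h6 (not_le.2 h), fun _ => by linarith⟩
        · have h5 := lt_of_le_of_ne ((hgconf i).1 h.le) (hgne i hi).symm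
          rw [le_div_iff₀ h5] at h4
          exact ⟨fun _ => by linarith, fun h6 => absurd h6 (not_le.2 h)⟩
    have hcard : (Finset.univ.filter fun i => rowL A i (u - t • g') ≠ 0).card ≤ N := by
      have : (Finset.univ.filter fun i => rowL A i (u - t • g') ≠ 0) ⊂
          (Finset.univ.filter fun i => rowL A i u ≠ 0) := by
        rw [Finset.ssubset_iff_of_subset]
        · refine ⟨i0, by simpa using hi0, ?_⟩
          simp only [Finset.mem_filter, Finset.mem_univ, true_and, not_not]
          rw [map_sub, map_smul, smul_eq_mul, ht, div_mul_cancel₀ _ (hgne i0 hi0), sub_self]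
        · intro i
          simp only [Finset.mem_filter, Finset.mem_univ, true_and]
          intro h1 h2
          exact h1 (le_antisymm ((hu'conf i).2 h2.le) ((hu'conf i).1 h2.ge))
      have := Finset.card_lt_card this
      omega
    obtain ⟨h, h1, h2, h3⟩ := ih _ hcard
    have hfl : (0 : ℝ) ≤ (⌊t⌋ : ℝ) := by exact_mod_cast Int.floor_nonneg.2 ht0.le
    have e1 : (fun j => ((h j + ⌊t⌋ * g j : ℤ) : ℝ)) =
        (fun j => (h j : ℝ)) + (⌊t⌋ : ℝ) • g' := by
      funext j; simp [hg']
    have e2 : u - ((fun j => (h j : ℝ)) + (⌊t⌋ : ℝ) • g') =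
        ((u - t • g') - fun j => (h j : ℝ)) + Int.fract t • g' := by
      rw [← Int.self_sub_floor t]
      module
    refine ⟨fun j => h j + ⌊t⌋ * g j, ?_, ?_, fun j => ?_⟩
    · rw [e1]
      exact (hu'conf.trans h1).add (hgconf.smul hfl)
    · rw [e1, e2]
      exact (hu'conf.trans h2).add (hgconf.smul (Int.fract_nonneg t))
    · have e3 := congrFun e2 j
      have e4 := congrFun e1 j
      simp only [Pi.sub_apply, Pi.add_apply, Pi.smul_apply, smul_eq_mul] at e3 e4 
      rw [e4, e3]
      refine (abs_add_le _ _).trans ?_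
      have h5 := h3 j
      simp only [Pi.sub_apply, Pi.smul_apply, smul_eq_mul] at h5
      have h6 : |Int.fract t * g' j| ≤ M := by
        rw [abs_mul, abs_of_nonneg (Int.fract_nonneg t)]
        have := (Int.fract_lt_one t).le
        have h7 := hgM j
        calc Int.fract t * |g' j| ≤ 1 * M := by gcongr
          _ = M := one_mul M
      push_cast
      linarith

noncomputable def resM {m n : ℕ} (A : Matrix (Fin m) (Fin n) ℚ) (I : Finset (Fin m)) :
    Matrix (Fin m) (Fin n) ℚ := Matrix.of fun i j => if i ∈ I then A i j else 0

open Classical in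
noncomputable def tightT {m n : ℕ} (A : Matrix (Fin m) (Fin n) ℚ) (I : Finset (Fin m)) :
    Matrix (Fin n) (Fin m) ℚ :=
  if h : ∃ L : Matrix (Fin n) (Fin m) ℚ, L * resM A I = 1 then
    Matrix.of fun r i => if i ∈ I then h.choose r i else 0 else 0

/-- Nonempty pointed polyhedra have a vertex. -/
lemma exists_vertex {m n : ℕ} (A : Matrix (Fin m) (Fin n) ℚ) (hrank : A.rank = n)
    (b : Fin m → ℝ) (hne : (Pb A b).Nonempty) :
    ∃ I : Finset (Fin m), (fun r => ∑ s, (tightT A I r s : ℝ) * b s) ∈ Pb A b := by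
  classical
  let tight : (Fin n → ℝ) → Finset (Fin m) := fun x => Finset.univ.filter fun i => rowL A i x = b i
  have hbdd : ∃ x ∈ Pb A b, ∀ y ∈ Pb A b, (tight y).card ≤ (tight x).card := by
    have hfin : ((fun y => (tight y).card) '' Pb A b).Finite :=
      (Set.finite_Iic m).subset (by
        rintro _ ⟨y, _, rfl⟩
        simpa using Finset.card_le_univ (tight y))
    obtain ⟨k, ⟨x, hx, rfl⟩, hk⟩ := Set.exists_max_image _ id hfin (hne.image _)
    exact ⟨x, hx, fun y hy => hk _ ⟨y, hy, rfl⟩⟩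
  obtain ⟨x, hx, hmax⟩ := hbdd
  have hx' := (mem_Pb A b x).1 hx
  have key : ∀ u : Fin n → ℝ, (∀ i ∈ tight x, rowL A i u = 0) → ∀ i, rowL A i u ≤ 0 := by
    intro u hu
    by_contra! hcon
    have hP : (Finset.univ.filter fun i => 0 < rowL A i u).Nonempty := by
      obtain ⟨i, hi⟩ := hcon
      exact ⟨i, by simpa using hi⟩
    obtain ⟨i0, hi0, hmin⟩ := Finset.exists_min_image _
      (fun i => (b i - rowL A i x) / rowL A i u) hP
    simp only [Finset.mem_filter, Finset.mem_univ, true_and] at hi0 hmin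
    set t := (b i0 - rowL A i0 x) / rowL A i0 u with ht
    have ht0 : 0 ≤ t := div_nonneg (sub_nonneg.2 (hx' i0)) hi0.le
    have hy : x + t • u ∈ Pb A b := by
      rw [mem_Pb]
      intro i
      rw [map_add, map_smul, smul_eq_mul]
      by_cases hi : 0 < rowL A i u
      · have := hmin i hi
        rw [le_div_iff₀ hi] at this
        linarith
      · have := mul_nonpos_of_nonneg_of_nonpos ht0 (not_lt.1 hi)
        linarith [hx' i]
    have hlt : (tight x).card < (tight (x + t • u)).card := by
      apply Finset.card_lt_card
      rw [Finset.ssubset_iff_of_subset]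
      · refine ⟨i0, ?_, fun h => hi0.ne' (hu i0 h)⟩
        simp only [tight, Finset.mem_filter, Finset.mem_univ, true_and]
        rw [map_add, map_smul, smul_eq_mul, ht, div_mul_cancel₀ _ hi0.ne']
        ring
      · intro i hi
        have h1 := hu i hi
        simp only [tight, Finset.mem_filter, Finset.mem_univ, true_and] at hi ⊢
        rw [map_add, map_smul, h1, hi]
        simp
    exact absurd (hmax _ hy) (not_le.2 hlt)
  have hex : ∃ L : Matrix (Fin n) (Fin m) ℚ, L * resM A (tight x) = 1 := by
    apply exists_left_inv
    intro u hu
    let u' : Fin n → ℝ := fun j => (u j : ℝ)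
    have hrow : ∀ i ∈ tight x, rowL A i u' = 0 := by
      intro i hi
      have := congrArg (fun q : ℚ => (q : ℝ)) (congrFun hu i)
      simp only [Matrix.mulVec, dotProduct, resM, Matrix.of_apply, hi, if_true] at this
      rw [rowL_apply]
      simpa using this
    have h1 := key u' hrow
    have h2 := key (-u') (by intro i hi; rw [map_neg, hrow i hi, neg_zero])
    have h3 := real_inj A hrank u' (fun i => by
      have := h2 i
      rw [map_neg] at this
      linarith [h1 i])
    funext j
    have := congrFun h3 j
    simpa [u'] using this
  refine ⟨tight x, ?_⟩
  convert hx using 1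
  funext r
  have hspec := hex.choose_spec
  rw [← left_inv_apply _ _ hspec x r]
  have : tightT A (tight x) =
      Matrix.of fun r i => if i ∈ tight x then hex.choose r i else 0 := dif_pos hex
  rw [this]
  refine Finset.sum_congr rfl fun i _ => ?_
  by_cases hi : i ∈ tight x
  · have hb : rowL A i x = b i := by simpa [tight] using hi
    simp only [Matrix.of_apply, hi, if_true, rowL_apply, resM, ← hb]
  · simp [hi, rowL_apply, resM]

lemma main_prox {m n : ℕ} (A : Matrix (Fin m) (Fin n) ℚ) (hrank : A.rank = n) :
    ∃ K : ℕ, ∀ b : Fin m → ℝ, (∃ x : Fin n → ℤ, (fun q => (x q : ℝ)) ∈ Pb A b) →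
      ∃ (I : Finset (Fin m)) (d : Fin n → Finset.Icc (-(K : ℤ)) K),
        (fun r => ((⌈∑ s, (tightT A I r s : ℝ) * b s⌉ + (d r : ℤ) : ℤ) : ℝ)) ∈ Pb A b := by
  classical
  obtain ⟨M, hM0, hM⟩ := exists_bound A
  refine ⟨⌈m * M⌉₊ + 1, ?_⟩
  rintro b ⟨z, hz⟩
  obtain ⟨I, hI⟩ := exists_vertex A hrank b ⟨_, hz⟩
  set x : Fin n → ℝ := fun r => ∑ s, (tightT A I r s : ℝ) * b s with hx
  obtain ⟨h, h1, h2, h3⟩ := exists_conf A hrank M hM0 hM m ((fun q => (z q : ℝ)) - x)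
    ((Finset.card_le_univ _).trans (by simp))
  have hd : ∀ r, z r - h r - ⌈x r⌉ ∈
      Finset.Icc (-((⌈(m : ℝ) * M⌉₊ + 1 : ℕ) : ℤ)) ((⌈(m : ℝ) * M⌉₊ + 1 : ℕ) : ℤ) := by
    intro r
    have h4 := abs_le.1 (h3 r)
    simp only [Pi.sub_apply] at h4
    have h5 := Nat.le_ceil (m * M)
    have h6 := Int.le_ceil (x r)
    have h7 := Int.ceil_lt_add_one (x r)
    rw [Finset.mem_Icc]
    constructor
    · have : (-((⌈(m : ℝ) * M⌉₊ + 1 : ℕ) : ℝ)) ≤ z r - h r - ⌈x r⌉ := by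
        push_cast; linarith [h4.1]
      exact_mod_cast this
    · have : (z r - h r - ⌈x r⌉ : ℝ) ≤ ((⌈(m : ℝ) * M⌉₊ + 1 : ℕ) : ℝ) := by
        push_cast; linarith [h4.2]
      exact_mod_cast this
  refine ⟨I, fun r => ⟨_, hd r⟩, ?_⟩
  have e : (fun r => ((⌈∑ s, (tightT A I r s : ℝ) * b s⌉ + (z r - h r - ⌈x r⌉) : ℤ) : ℝ)) =
      (fun q => (z q : ℝ)) - fun q => (h q : ℝ) := by
    funext r
    simp [hx]
  show (fun r => ((⌈∑ s, (tightT A I r s : ℝ) * b s⌉ + (z r - h r - ⌈x r⌉) : ℤ) : ℝ)) ∈ Pb A b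
  rw [e, mem_Pb]
  intro i
  rw [mem_Pb] at hz hI
  have a1 := h1 i
  have a2 := h2 i
  simp only [map_sub] at a1 a2 ⊢
  rcases le_total 0 (rowL A i (fun q => (z q : ℝ)) - rowL A i x) with hh | hh
  · linarith [a1.1 hh, hz i]
  · linarith [a2.2 hh, hI i]

/-- Partitioning theorem, Theorem 4.  Let `A ∈ ℚ^{m×n}` have full
column rank and define a parametric polyhedron of finite lattice width, and let
`Q ⊆ ℝ^m` be a rational partially open polyhedron with `P_b ≠ ∅` for all `b ∈ Q`.
Then `Q` can be partitioned into sets `Sᵢ`, each the integer projection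
`S'ᵢ / ℤ^{lᵢ}` of a rational partially open polyhedron `S'ᵢ ⊆ ℝ^{m+lᵢ}`, equipped with
unimodular matrices `Uᵢⱼ` and rational affine maps `Tᵢⱼ` such that for all `b ∈ Sᵢ`:
`P_b` contains an integral point iff `Uᵢⱼ ⌈Tᵢⱼ b⌉ ∈ P_b` for some `j`. -/
theorem partitioning_theorem {m n : ℕ}
    (A : Matrix (Fin m) (Fin n) ℚ) (hrank : A.rank = n)
    (hfin : ∀ b : Fin m → ℝ, (Pb A b).Nonempty → latticeWidth (Pb A b) ≠ ⊤)
    (Q : Set (Fin m → ℝ)) (hQ : IsRatPOPolyhedron Q)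
    (hQne : ∀ b ∈ Q, (Pb A b).Nonempty) :
    ∃ (t : ℕ) (S : Fin t → Set (Fin m → ℝ)) (l : Fin t → ℕ)
      (S' : (i : Fin t) → Set (Fin (m + l i) → ℝ))
      (k : Fin t → ℕ)
      (U : (i : Fin t) → Fin (k i) → Matrix (Fin n) (Fin n) ℤ)
      (T : (i : Fin t) → Fin (k i) → Matrix (Fin n) (Fin m) ℚ)
      (v : (i : Fin t) → Fin (k i) → Fin n → ℚ),
      -- `S₁, …, S_t` is a partition of `Q`
      (⋃ i, S i) = Q ∧
      (∀ i j, i ≠ j → Disjoint (S i) (S j)) ∧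
      -- each `Sᵢ` is the integer projection of a rational partially open polyhedron
      (∀ i, IsRatPOPolyhedron (S' i)) ∧
      (∀ i, S i = {b | ∃ z : Fin (l i) → ℤ,
        Fin.append b (fun q => (z q : ℝ)) ∈ S' i}) ∧
      -- the matrices `Uᵢⱼ` are unimodular
      (∀ i j, IsUnit (U i j).det) ∧
      -- the characterization of integer feasibility via the candidate points
      (∀ i, ∀ b ∈ S i,
        ((∃ x : Fin n → ℤ, (fun q => (x q : ℝ)) ∈ Pb A b) ↔
          ∃ j, (fun q => (((U i j).mulVec
              (fun r => ⌈(∑ s, (T i j r s : ℝ) * b s) + (v i j r : ℝ)⌉)) q : ℝ))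
            ∈ Pb A b)) := by
  classical
  obtain ⟨K, hK⟩ := main_prox A hrank
  let ι := Finset (Fin m) × (Fin n → Finset.Icc (-(K : ℤ)) K)
  let e : Fin (Fintype.card ι) ≃ ι := (Fintype.equivFin ι).symm
  refine ⟨1, fun _ => Q, fun _ => 0, fun _ => Q, fun _ => Fintype.card ι, fun _ _ => 1,
    fun _ j => tightT A (e j).1, fun _ j r => (((e j).2 r : ℤ) : ℚ), ?_, ?_, ?_, ?_, ?_, ?_⟩
  · exact Set.iUnion_const Q
  · intro i j hij
    exact absurd (Subsingleton.elim i j) hij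
  · exact fun _ => hQ
  · intro _
    ext b
    have : ∀ z : Fin 0 → ℝ, Fin.append b z = b := fun z => by
      rw [Fin.append_right_nil _ _ rfl]; rfl
    constructor
    · intro hb
      refine ⟨fun _ => 0, ?_⟩
      rw [this]; exact hb
    · rintro ⟨z, hz⟩
      rw [this] at hz; exact hz
  · intro i j; simp
  · intro i b hb
    constructor
    · intro hx
      obtain ⟨I, d, h⟩ := hK b hx
      refine ⟨e.symm (I, d), ?_⟩
      simp only [Equiv.apply_symm_apply, Matrix.one_mulVec]
      convert h using 1
      funext r
      have : (((((d r : ℤ) : ℚ)) : ℝ)) = ((d r : ℤ) : ℝ) := by norm_cast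
      rw [this, Int.ceil_add_intCast]
    · rintro ⟨j, hj⟩
      exact ⟨_, hj⟩
end
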